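/- Let N ≥ 1, 1 < p < 2, 0 < γ < p, λ₊, λ₋ > 0, δ₀ > 0, M > 0, and define V(a) := |a|^{(p−2)/2} a for a ∈ ℝ^N (with V(0) := 0). There exists C > 0, depending only on N, p, γ, λ₊, λ₋, δ₀ and M, with the following property. Let Ω ⊆ ℝ^N be open and bounded, δ ∈ [0, δ₀], and let u be a local minimizer of J_δ on Ω with closure(B_{4R}(x₀)) ⊆ Ω and sup_{B_{4R}(x₀)} |u| ≤ M. Let ū ∈ C¹(B_{2R}(x₀)) ∩ C(closure(B_{2R}(x₀))) satisfy: (i) ∫ |∇ū|^{p−2} ∇ū·∇φ dx = 0 for all φ ∈ C_c^∞(B_{2R}(x₀)); (ii) ū = u on ∂B_{2R}(x₀); (iii) sup_{B_{2R}(x₀)} |ū| ≤ sup_{B_{2R}(x₀)} |u|; (iv) ∫_{B_{2R}(x₀)} |∇ū|^p dx ≤ ∫_{B_{2R}(x₀)} |∇u|^p dx < ∞; (v) ∫_{B_{2R}(x₀)} (|∇u|^p/p + δ F_γ(u)) dx ≤ ∫_{B_{2R}(x₀)} (|∇ū|^p/p + δ F_γ(ū)) dx. Then ∫_{B_R(x₀)}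 |V(∇u) − V(∇ū)|² dx ≤ C R^{N + pγ/(2−γ)} if 0 < γ ≤ 1, and ∫_{B_R(x₀)} |V(∇u) − V(∇ū)|² dx ≤ C R^{N + p} if 1 ≤ γ < p. -/

import Mathlib

open MeasureTheory Metric Set
open scoped InnerProductSpace

/-- The Alt–Phillips potential `F_γ(t) = λ₊ (t₊)^γ + λ₋ (t₋)^γ`. -/
noncomputable def Fgam (γ lp lm : ℝ) (t : ℝ) : ℝ :=
  lp * (max t 0) ^ γ + lm * (max (-t) 0) ^ γ

/-- `u` is a `C¹(Ω)` function with `∫_Ω ‖∇u‖^p < ∞` which is a local minimizer of the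
functional with density `‖∇v‖^p/p + F(v)`, with respect to Lipschitz competitors on
balls compactly contained in `Ω` agreeing with `u` on the boundary sphere. -/
def APLocMin (N : ℕ) (p : ℝ) (F : ℝ → ℝ) (Ω : Set (EuclideanSpace ℝ (Fin N)))
    (u : EuclideanSpace ℝ (Fin N) → ℝ) : Prop :=
  (∀ x ∈ Ω, DifferentiableAt ℝ u x) ∧
  ContinuousOn (fun x => gradient u x) Ω ∧
  IntegrableOn (fun x => ‖gradient u x‖ ^ p) Ω volume ∧
  ∀ (z : EuclideanSpace ℝ (Fin N)) (r : ℝ), 0 < r → closure (Metric.ball z r) ⊆ Ω →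
    ∀ (v : EuclideanSpace ℝ (Fin N) → ℝ) (K : NNReal),
      LipschitzOnWith K v (closure (Metric.ball z r)) →
      Set.EqOn v u (Metric.sphere z r) →
      (∫ x in Metric.ball z r, (‖gradient u x‖ ^ p / p + F (u x))) ≤
        ∫ x in Metric.ball z r, (‖gradient v x‖ ^ p / p + F (v x))

/-- The nonlinear map `V(a) = |a|^{(p-2)/2} a` (with `V(0) = 0`). -/
noncomputable def Vmap (N : ℕ) (p : ℝ) (a : EuclideanSpace ℝ (Fin N)) :
    EuclideanSpace ℝ (Fin N) :=
  ‖a‖ ^ ((p - 2) / 2) • a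

open scoped Gradient Topology

/-!
By convexity, the squared distance of `V(∇u)` and `V(∇w)` is controlled by the Bregman distance of
`‖·‖ ^ p` at `∇w`; as `w` is `p`-harmonic with the boundary values of `u`, the linear term
integrates to zero and only the gap of the Dirichlet energies remains. Minimality of `u` bounds this
gap by the difference of the potentials, which are Hölder continuous of exponent `ν = min γ 1`.
Interpolating `|u - w| ^ ν` at a height `s`, an `L¹` Poincaré inequality and Young's inequality
absorb the term linear in `∇u - ∇w` into the left-hand side. What is left is estimated by the
Caccioppoli inequality `r ^ p ∫ ‖∇u‖ ^ p ≤ C r ^ N`, and `s = r ^ (p / (2 - ν))` is the optimal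
height.
-/

section ScalarInequalities

lemma rpow_half_sq {x : ℝ} (hx : 0 ≤ x) (p : ℝ) : (x ^ (p / 2)) ^ 2 = x ^ p := by
  rw [← Real.rpow_mul_natCast hx]
  congr 1
  push_cast
  ring

lemma max_rpow_le_add {x y : ℝ} (hx : 0 ≤ x) (hy : 0 ≤ y) (p : ℝ) :
    max x y ^ p ≤ x ^ p + y ^ p := by
  rcases max_choice x y with h | h <;> rw [h]
  · linarith [Real.rpow_nonneg hy p]
  · linarith [Real.rpow_nonneg hx p]

lemma rpow_le_one_add_rpow {x p q : ℝ} (hx : 0 ≤ x) (hp : 0 ≤ p) (hpq : p ≤ q) :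
    x ^ p ≤ 1 + x ^ q := by
  rcases le_total x 1 with h | h
  · linarith [Real.rpow_le_one hx h hp, Real.rpow_nonneg hx q]
  · linarith [Real.rpow_le_rpow_of_exponent_le h hpq]

lemma rpow_le_rpow_add_mul {s t μ : ℝ} (hs : 0 < s) (ht : 0 ≤ t) (hμ0 : 0 ≤ μ) (hμ1 : μ ≤ 1) :
    t ^ μ ≤ s ^ μ + s ^ (μ - 1) * t := by
  have hdiv : (t / s) ^ μ ≤ 1 + (t / s) ^ (1 : ℝ) :=
    rpow_le_one_add_rpow (by positivity) hμ0 hμ1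
  rw [Real.div_rpow ht hs.le, Real.rpow_one, div_le_iff₀ (by positivity)] at hdiv
  calc t ^ μ ≤ (1 + t / s) * s ^ μ := hdiv
    _ = s ^ μ + s ^ (μ - 1) * t := by rw [Real.rpow_sub_one hs.ne']; ring

lemma mul_rpow_sub_one_mul_le {p x y : ℝ} (hp1 : 1 < p) (hp2 : p ≤ 2) (hx : 0 ≤ x) (hy : 0 ≤ y) :
    p * (y ^ (p - 1) * x) ≤ (2 * p - 2) * (x ^ (p / 2) * y ^ (p / 2)) + (2 - p) * x ^ p := by
  have amgm := Real.geom_mean_le_arith_mean2_weighted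
    (w₁ := (2 * p - 2) / p) (w₂ := (2 - p) / p) (p₁ := x ^ (p / 2) * y ^ (p / 2)) (p₂ := x ^ p)
    (div_nonneg (by linarith) (by linarith)) (div_nonneg (by linarith) (by linarith))
    (by positivity) (by positivity) (by field_simp; ring)
  have hmean : (x ^ (p / 2) * y ^ (p / 2)) ^ ((2 * p - 2) / p) * (x ^ p) ^ ((2 - p) / p)
      = y ^ (p - 1) * x := by
    rw [Real.mul_rpow (by positivity) (by positivity), ← Real.rpow_mul hx, ← Real.rpow_mul hy,
      ← Real.rpow_mul hx, show p / 2 * ((2 * p - 2) / p) = p - 1 by field_simp,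
      show p * ((2 - p) / p) = 2 - p by field_simp, mul_right_comm,
      ← Real.rpow_add_of_nonneg hx (by linarith) (by linarith),
      show p - 1 + (2 - p) = 1 by ring, Real.rpow_one, mul_comm]
  rw [hmean] at amgm
  calc p * (y ^ (p - 1) * x)
      ≤ p * ((2 * p - 2) / p * (x ^ (p / 2) * y ^ (p / 2)) + (2 - p) / p * x ^ p) := by gcongr
    _ = _ := by field_simp

lemma convex_combination_rpow_le {p ψ a m : ℝ} (hp1 : 1 ≤ p) (hp2 : p ≤ 2) (hψ : ψ ∈ Icc (0 : ℝ) 1)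
    (ha : 0 ≤ a) (hm : 0 ≤ m) :
    ((1 - ψ ^ 2) * a + ψ * m) ^ p ≤ (1 - ψ ^ 2) * a ^ p + m ^ p := by
  rcases hψ.1.eq_or_lt with rfl | hψ0
  · simpa using Real.rpow_nonneg hm p
  have hψ2 : 0 ≤ 1 - ψ ^ 2 := by nlinarith [hψ.1, hψ.2]
  have jensen := (convexOn_rpow hp1).2 ha (mem_Ici.2 (div_nonneg hm hψ.1)) hψ2 (sq_nonneg ψ)
    (by ring)
  simp only [smul_eq_mul] at jensen
  have hpow : ψ ^ 2 ≤ ψ ^ p := by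
    simpa using Real.rpow_le_rpow_of_exponent_ge hψ0 hψ.2 hp2
  calc ((1 - ψ ^ 2) * a + ψ * m) ^ p
      = ((1 - ψ ^ 2) * a + ψ ^ 2 * (m / ψ)) ^ p := by congr 2; field_simp
    _ ≤ (1 - ψ ^ 2) * a ^ p + ψ ^ 2 * (m ^ p / ψ ^ p) := by rwa [← Real.div_rpow hm hψ.1]
    _ ≤ (1 - ψ ^ 2) * a ^ p + m ^ p := by
      gcongr
      rw [mul_div_left_comm]
      exact mul_le_of_le_one_right (by positivity) (div_le_one_of_le₀ hpow (by positivity))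

lemma abs_rpow_sub_rpow_le_of_le_one {γ x y : ℝ} (hγ0 : 0 ≤ γ) (hγ1 : γ ≤ 1) (hx : 0 ≤ x)
    (hy : 0 ≤ y) : |x ^ γ - y ^ γ| ≤ |x - y| ^ γ := by
  wlog hyx : y ≤ x generalizing x y
  · rw [abs_sub_comm, abs_sub_comm x]
    exact this hy hx (le_of_not_ge hyx)
  have hsub := Real.rpow_add_le_add_rpow (sub_nonneg.mpr hyx) hy hγ0 hγ1
  rw [sub_add_cancel] at hsub
  rw [abs_of_nonneg (sub_nonneg.mpr (Real.rpow_le_rpow hy hyx hγ0)),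
    abs_of_nonneg (sub_nonneg.mpr hyx)]
  linarith

lemma abs_rpow_sub_rpow_le_of_one_le {γ M x y : ℝ} (hγ : 1 ≤ γ) (hx : x ∈ Icc 0 M)
    (hy : y ∈ Icc 0 M) : |x ^ γ - y ^ γ| ≤ γ * M ^ (γ - 1) * |x - y| := by
  refine (convex_Icc 0 M).norm_image_sub_le_of_norm_hasDerivWithin_le
    (fun z _ => (Real.hasDerivAt_rpow_const (Or.inr hγ)).hasDerivWithinAt) (fun z hz => ?_) hy hx
  have hz0 := Real.rpow_nonneg hz.1 (γ - 1)
  rw [Real.norm_of_nonneg (by positivity)]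
  gcongr
  exacts [hz.1, hz.2]

lemma abs_rpow_sub_rpow_le {γ M x y : ℝ} (hγ : 0 ≤ γ) (hx : x ∈ Icc 0 M) (hy : y ∈ Icc 0 M) :
    |x ^ γ - y ^ γ| ≤ max 1 (γ * M ^ (γ - 1)) * |x - y| ^ min γ 1 := by
  rcases le_total γ 1 with h | h
  · rw [min_eq_left h]
    exact (abs_rpow_sub_rpow_le_of_le_one hγ h hx.1 hy.1).trans
      (le_mul_of_one_le_left (by positivity) (le_max_left _ _))
  · rw [min_eq_right h, Real.rpow_one]
    refine (abs_rpow_sub_rpow_le_of_one_le h hx hy).trans ?_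
    gcongr
    exact le_max_right _ _

end ScalarInequalities

section Potential

variable {γ lp lm : ℝ}

lemma continuous_Fgam (hγ : 0 ≤ γ) : Continuous (Fgam γ lp lm) := by
  have hpow {f : ℝ → ℝ} (hf : Continuous f) : Continuous fun t => f t ^ γ :=
    hf.rpow_const fun _ => Or.inr hγ
  exact ((hpow (by fun_prop)).const_mul _).add ((hpow (by fun_prop)).const_mul _)

lemma Fgam_mul_le (hγ : 0 ≤ γ) (hlp : 0 ≤ lp) (hlm : 0 ≤ lm) {c : ℝ} (hc : c ∈ Icc (0 : ℝ) 1)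
    (t : ℝ) : Fgam γ lp lm (c * t) ≤ Fgam γ lp lm t := by
  have hmax (s : ℝ) : max (c * s) 0 ≤ max s 0 := by
    calc max (c * s) 0 = c * max s 0 := by rw [mul_max_of_nonneg _ _ hc.1, mul_zero]
      _ ≤ max s 0 := mul_le_of_le_one_left (le_max_right _ _) hc.2
  unfold Fgam
  rw [← mul_neg]
  exact add_le_add
    (mul_le_mul_of_nonneg_left (Real.rpow_le_rpow (le_max_right _ _) (hmax _) hγ) hlp)
    (mul_le_mul_of_nonneg_left (Real.rpow_le_rpow (le_max_right _ _) (hmax _) hγ) hlm)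

lemma Fgam_sub_le (hγ : 0 ≤ γ) (hlp : 0 ≤ lp) (hlm : 0 ≤ lm) {M s t : ℝ} (hs : |s| ≤ M)
    (ht : |t| ≤ M) : Fgam γ lp lm s - Fgam γ lp lm t ≤
      (lp + lm) * max 1 (γ * M ^ (γ - 1)) * |s - t| ^ min γ 1 := by
  have hM : 0 ≤ M := (abs_nonneg s).trans hs
  have hpart {x y : ℝ} (hx : |x| ≤ M) (hy : |y| ≤ M) : max x 0 ^ γ - max y 0 ^ γ ≤
      max 1 (γ * M ^ (γ - 1)) * |x - y| ^ min γ 1 := by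
    refine (le_abs_self _).trans ((abs_rpow_sub_rpow_le hγ
      ⟨le_max_right _ _, max_le (le_of_abs_le hx) hM⟩
      ⟨le_max_right _ _, max_le (le_of_abs_le hy) hM⟩).trans
      (mul_le_mul_of_nonneg_left ?_ (by positivity)))
    exact Real.rpow_le_rpow (abs_nonneg _) (abs_max_sub_max_le_abs x y 0) (by positivity)
  have hpos := mul_le_mul_of_nonneg_left (hpart hs ht) hlp
  have hneg := mul_le_mul_of_nonneg_left
    (hpart ((abs_neg s).trans_le hs) ((abs_neg t).trans_le ht)) hlm
  rw [show -s - -t = -(s - t) by ring, abs_neg] at hneg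
  unfold Fgam
  linarith

end Potential

section FluxAndVmap

lemma norm_rpow_mul_norm_self {E : Type*} [NormedAddCommGroup E] {q : ℝ} (hq : q + 1 ≠ 0) (a : E) :
    ‖a‖ ^ q * ‖a‖ = ‖a‖ ^ (q + 1) :=
  (Real.rpow_add_one' (norm_nonneg a) hq).symm

lemma norm_rpow_smul_self {E : Type*} [NormedAddCommGroup E] [NormedSpace ℝ E] {p : ℝ}
    (hp : 1 < p) (a : E) : ‖‖a‖ ^ (p - 2) • a‖ = ‖a‖ ^ (p - 1) := by
  rw [norm_smul, Real.norm_of_nonneg (by positivity), norm_rpow_mul_norm_self (by linarith)]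
  congr 1
  ring

lemma continuous_norm_rpow_smul_self {E : Type*} [NormedAddCommGroup E] [NormedSpace ℝ E] {p : ℝ}
    (hp : 1 < p) : Continuous fun a : E => ‖a‖ ^ (p - 2) • a := by
  refine continuous_iff_continuousAt.2 fun a => ?_
  rcases eq_or_ne a 0 with rfl | ha
  · have hlim : Filter.Tendsto (fun a : E => ‖a‖ ^ (p - 1)) (𝓝 0) (𝓝 0) := by
      simpa [Real.zero_rpow (sub_pos.2 hp).ne'] using
        (continuous_norm.tendsto (0 : E)).rpow_const (Or.inr (sub_pos.2 hp).le)
    simp only [ContinuousAt, smul_zero]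
    exact squeeze_zero_norm (fun a => (norm_rpow_smul_self hp a).le) hlim
  · fun_prop (disch := simp [ha])

variable {N : ℕ} {p : ℝ}

lemma norm_Vmap (hp : 0 < p) (a : EuclideanSpace ℝ (Fin N)) : ‖Vmap N p a‖ = ‖a‖ ^ (p / 2) := by
  rw [Vmap, norm_smul, Real.norm_of_nonneg (by positivity), norm_rpow_mul_norm_self (by linarith)]
  congr 1
  ring

lemma norm_Vmap_sq (hp : 0 < p) (a : EuclideanSpace ℝ (Fin N)) : ‖Vmap N p a‖ ^ 2 = ‖a‖ ^ p := by
  rw [norm_Vmap hp, rpow_half_sq (norm_nonneg a)]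

lemma norm_rpow_smul_Vmap (a : EuclideanSpace ℝ (Fin N)) :
    ‖a‖ ^ ((2 - p) / 2) • Vmap N p a = a := by
  rcases eq_or_ne a 0 with rfl | ha
  · simp [Vmap]
  · rw [Vmap, smul_smul, ← Real.rpow_add (norm_pos_iff.2 ha),
      show (2 - p) / 2 + (p - 2) / 2 = 0 by ring, Real.rpow_zero, one_smul]

lemma abs_bregman_slope_mul_le (hp1 : 1 < p) (hp2 : p ≤ 2) (a b : EuclideanSpace ℝ (Fin N)) :
    |(p - 1) * (‖a‖ ^ ((p - 2) / 2) * ‖b‖ ^ ((p - 2) / 2)) - p * ‖b‖ ^ (p - 2)| * (‖a‖ * ‖b‖) ≤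
      ‖a‖ ^ p + (p - 1) * ‖b‖ ^ p - (p - 1) / 2 * (‖a‖ ^ p + ‖b‖ ^ p) := by
  have hhalf (c : EuclideanSpace ℝ (Fin N)) : ‖c‖ ^ ((p - 2) / 2) * ‖c‖ = ‖c‖ ^ (p / 2) := by
    rw [norm_rpow_mul_norm_self (by linarith)]; congr 1; ring
  have hcross : (p - 1) * (‖a‖ ^ ((p - 2) / 2) * ‖b‖ ^ ((p - 2) / 2)) * (‖a‖ * ‖b‖) =
      (p - 1) * (‖a‖ ^ (p / 2) * ‖b‖ ^ (p / 2)) := by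
    rw [← hhalf a, ← hhalf b]; ring
  have amgm := mul_rpow_sub_one_mul_le hp1 hp2 (norm_nonneg a) (norm_nonneg b)
  rw [show p - 1 = p - 2 + 1 by ring, ← norm_rpow_mul_norm_self (by linarith)] at amgm
  have hnonneg : 0 ≤ p * ‖b‖ ^ (p - 2) * (‖a‖ * ‖b‖) := by positivity
  have hcross_le : (p - 1) * (2 * ‖a‖ ^ (p / 2) * ‖b‖ ^ (p / 2)) ≤
      (p - 1) * (‖a‖ ^ p + ‖b‖ ^ p) := by
    rw [← rpow_half_sq (norm_nonneg a) p, ← rpow_half_sq (norm_nonneg b) p]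
    exact mul_le_mul_of_nonneg_left (two_mul_le_add_sq _ _) (sub_nonneg.2 hp1.le)
  have hpa : 0 ≤ (2 - p) * ‖a‖ ^ p := mul_nonneg (sub_nonneg.2 hp2) (by positivity)
  rw [← abs_of_nonneg (by positivity : 0 ≤ ‖a‖ * ‖b‖), ← abs_mul, abs_le,
    sub_mul _ (p * _), hcross]
  constructor <;> linarith

/- The difference of the two sides is affine in `⟪a, b⟫ ∈ [-‖a‖‖b‖, ‖a‖‖b‖]`, so only the two
endpoints have to be checked. -/
lemma norm_Vmap_sub_sq_le_bregman (hp1 : 1 < p) (hp2 : p ≤ 2) (a b : EuclideanSpace ℝ (Fin N)) :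
    (p - 1) / 2 * ‖Vmap N p a - Vmap N p b‖ ^ 2 ≤
      ‖a‖ ^ p - ‖b‖ ^ p - p * ⟪‖b‖ ^ (p - 2) • b, a - b⟫_ℝ := by
  have hp0 : 0 < p := by linarith
  have haffine : |((p - 1) * (‖a‖ ^ ((p - 2) / 2) * ‖b‖ ^ ((p - 2) / 2)) - p * ‖b‖ ^ (p - 2)) *
      ⟪a, b⟫_ℝ| ≤ ‖a‖ ^ p + (p - 1) * ‖b‖ ^ p - (p - 1) / 2 * (‖a‖ ^ p + ‖b‖ ^ p) := by
    rw [abs_mul]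
    exact (mul_le_mul_of_nonneg_left (abs_real_inner_le_norm a b) (abs_nonneg _)).trans
      (abs_bregman_slope_mul_le hp1 hp2 a b)
  have hbb : ‖b‖ ^ (p - 2) * ‖b‖ ^ 2 = ‖b‖ ^ p := by
    rw [sq, ← mul_assoc, norm_rpow_mul_norm_self (by linarith),
      norm_rpow_mul_norm_self (by linarith)]
    congr 1
    ring
  rw [norm_sub_sq_real, norm_Vmap_sq hp0, norm_Vmap_sq hp0, Vmap, Vmap]
  simp only [inner_smul_left, inner_smul_right, inner_sub_right, real_inner_self_eq_norm_sq,
    real_inner_comm a b, conj_trivial]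
  linear_combination (neg_le_of_abs_le haffine) - p * hbb

lemma norm_sub_le_norm_Vmap_sub (hp1 : 1 ≤ p) (hp2 : p ≤ 2) (a b : EuclideanSpace ℝ (Fin N)) :
    ‖a - b‖ ≤ 2 * max ‖a‖ ‖b‖ ^ ((2 - p) / 2) * ‖Vmap N p a - Vmap N p b‖ := by
  wlog hba : ‖b‖ ≤ ‖a‖ generalizing a b
  · rw [norm_sub_rev, max_comm, norm_sub_rev (Vmap N p a)]
    exact this b a (le_of_not_ge hba)
  rw [max_eq_left hba]
  have hp0 : 0 < p := by linarith
  set θ := (2 - p) / 2 with hθ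
  have hθ0 : 0 ≤ θ := by linarith
  have hmono : ‖b‖ ^ θ ≤ ‖a‖ ^ θ := Real.rpow_le_rpow (norm_nonneg b) hba hθ0
  have hsplit : a - b =
      ‖a‖ ^ θ • (Vmap N p a - Vmap N p b) + (‖a‖ ^ θ - ‖b‖ ^ θ) • Vmap N p b := by
    rw [smul_sub, sub_smul, norm_rpow_smul_Vmap, norm_rpow_smul_Vmap]
    abel
  have hnorm (c : EuclideanSpace ℝ (Fin N)) : ‖c‖ ^ θ * ‖Vmap N p c‖ = ‖c‖ := by
    rw [norm_Vmap hp0, ← Real.rpow_add_of_nonneg (norm_nonneg c) hθ0 (by positivity),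
      show θ + p / 2 = 1 by rw [hθ]; ring, Real.rpow_one]
  have young : ‖a‖ ^ θ * ‖Vmap N p b‖ ≤ (2 - p) / 2 * ‖a‖ + p / 2 * ‖b‖ := by
    rw [norm_Vmap hp0]
    exact Real.geom_mean_le_arith_mean2_weighted hθ0 (by positivity) (norm_nonneg a)
      (norm_nonneg b) (by rw [hθ]; ring)
  have hrest : (‖a‖ ^ θ - ‖b‖ ^ θ) * ‖Vmap N p b‖ ≤ ‖a‖ ^ θ * ‖Vmap N p a - Vmap N p b‖ :=
    calc (‖a‖ ^ θ - ‖b‖ ^ θ) * ‖Vmap N p b‖ ≤ ‖a‖ ^ θ * (‖Vmap N p a‖ - ‖Vmap N p b‖) := by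
          rw [sub_mul, mul_sub, hnorm, hnorm]
          linarith [mul_nonneg (sub_nonneg.2 hp1) (sub_nonneg.2 hba)]
      _ ≤ _ := by gcongr; exact norm_sub_norm_le _ _
  calc ‖a - b‖ ≤ ‖a‖ ^ θ * ‖Vmap N p a - Vmap N p b‖ + (‖a‖ ^ θ - ‖b‖ ^ θ) * ‖Vmap N p b‖ := by
        conv_lhs => rw [hsplit]
        refine (norm_add_le _ _).trans_eq ?_
        rw [norm_smul, norm_smul, Real.norm_of_nonneg (by positivity),
          Real.norm_of_nonneg (sub_nonneg.2 hmono)]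
    _ ≤ _ := by linarith

lemma mul_norm_sub_le_norm_Vmap_sub_sq (hp1 : 1 < p) (hp2 : p ≤ 2) {A r : ℝ} (hA : 0 ≤ A)
    (hr : 0 < r) (a b : EuclideanSpace ℝ (Fin N)) :
    A * r * ‖a - b‖ ≤ (p - 1) / 4 * ‖Vmap N p a - Vmap N p b‖ ^ 2 +
      4 / (p - 1) * A ^ 2 * (r ^ p * (1 + r ^ p * (‖a‖ ^ p + ‖b‖ ^ p))) := by
  have hp0 : 0 < p - 1 := by linarith
  set D := ‖Vmap N p a - Vmap N p b‖
  set m := max ‖a‖ ‖b‖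
  have hm0 : 0 ≤ m := (norm_nonneg a).trans (le_max_left _ _)
  have hweight : (r * m ^ ((2 - p) / 2)) ^ 2 ≤ r ^ p * (1 + r ^ p * (‖a‖ ^ p + ‖b‖ ^ p)) :=
    calc (r * m ^ ((2 - p) / 2)) ^ 2 = r ^ p * (r * m) ^ (2 - p) := by
          rw [mul_pow, rpow_half_sq hm0, Real.mul_rpow hr.le hm0, ← mul_assoc, ← Real.rpow_add hr,
            add_sub_cancel, Real.rpow_two]
      _ ≤ r ^ p * (1 + (r * m) ^ p) := by
          gcongr
          exact rpow_le_one_add_rpow (by positivity) (by linarith) (by linarith)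
      _ ≤ _ := by
          rw [Real.mul_rpow hr.le hm0]
          gcongr
          exact max_rpow_le_add (norm_nonneg a) (norm_nonneg b) p
  have young (t : ℝ) : 2 * A * t * D ≤ (p - 1) / 4 * D ^ 2 + 4 / (p - 1) * A ^ 2 * t ^ 2 := by
    have hsq : 0 ≤ (p - 1) / 4 * (D - 4 / (p - 1) * (A * t)) ^ 2 := by positivity
    have hexp : (p - 1) / 4 * (D - 4 / (p - 1) * (A * t)) ^ 2 =
        (p - 1) / 4 * D ^ 2 + 4 / (p - 1) * A ^ 2 * t ^ 2 - 2 * A * t * D := by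
      field_simp
      ring
    linarith
  calc A * r * ‖a - b‖ ≤ A * r * (2 * m ^ ((2 - p) / 2) * D) := by
        gcongr
        exact norm_sub_le_norm_Vmap_sub hp1.le hp2 a b
    _ = 2 * A * (r * m ^ ((2 - p) / 2)) * D := by ring
    _ ≤ _ := young _
    _ ≤ _ := by gcongr

end FluxAndVmap

section SoftTruncation

/-- The `C¹` soft threshold: an odd nondecreasing `1`-Lipschitz function vanishing on `[-ε, ε]`
and converging to the identity as `ε → 0`. It is given by its derivative `1 - ε / max |s| ε`. -/
noncomputable def softTrunc (ε t : ℝ) : ℝ := ∫ s in (0 : ℝ)..t, (1 - ε / max |s| ε)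

variable {ε : ℝ}

lemma continuous_one_sub_div_max (hε : 0 < ε) : Continuous fun s : ℝ => 1 - ε / max |s| ε :=
  continuous_const.sub (continuous_const.div (by fun_prop)
    fun _ => (hε.trans_le (le_max_right _ _)).ne')

lemma one_sub_div_max_mem_Icc (hε : 0 < ε) (s : ℝ) : 1 - ε / max |s| ε ∈ Icc (0 : ℝ) 1 := by
  have hmax : 0 < max |s| ε := hε.trans_le (le_max_right _ _)
  exact ⟨sub_nonneg.2 ((div_le_one hmax).2 (le_max_right _ _)),
    sub_le_self _ (div_nonneg hε.le hmax.le)⟩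

lemma hasDerivAt_softTrunc (hε : 0 < ε) (t : ℝ) :
    HasDerivAt (softTrunc ε) (1 - ε / max |t| ε) t :=
  (continuous_one_sub_div_max hε).integral_hasStrictDerivAt 0 t |>.hasDerivAt

lemma contDiff_softTrunc (hε : 0 < ε) : ContDiff ℝ 1 (softTrunc ε) := by
  rw [contDiff_one_iff_deriv]
  refine ⟨fun t => (hasDerivAt_softTrunc hε t).differentiableAt, ?_⟩
  rw [funext fun t => (hasDerivAt_softTrunc hε t).deriv]
  exact continuous_one_sub_div_max hε

lemma softTrunc_eq_zero (hε : 0 < ε) {t : ℝ} (ht : |t| ≤ ε) : softTrunc ε t = 0 := by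
  refine intervalIntegral.integral_zero_ae (Filter.Eventually.of_forall fun s hs => ?_)
  have hs' : |s| ≤ ε := by
    simpa using (abs_sub_left_of_mem_uIcc (uIoc_subset_uIcc hs)).trans (by simpa using ht)
  rw [max_eq_right hs', div_self hε.ne', sub_self]

lemma abs_softTrunc_le (hε : 0 < ε) (t : ℝ) : |softTrunc ε t| ≤ |t| := by
  have hbound := intervalIntegral.norm_integral_le_of_norm_le_const (a := 0) (b := t) (C := 1)
    (f := fun s => 1 - ε / max |s| ε) fun s _ => by
      rw [Real.norm_of_nonneg (one_sub_div_max_mem_Icc hε s).1]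
      exact (one_sub_div_max_mem_Icc hε s).2
  simpa [softTrunc] using hbound

variable {ι : Type*} {l : Filter ι} {e : ι → ℝ}

lemma tendsto_one_sub_div_max (he : Filter.Tendsto e l (𝓝 0)) {s : ℝ} (hs : s ≠ 0) :
    Filter.Tendsto (fun i => 1 - e i / max |s| (e i)) l (𝓝 1) := by
  have hmax : max |s| 0 = |s| := max_eq_left (abs_nonneg s)
  simpa using tendsto_const_nhds.sub
    (he.div (tendsto_const_nhds.max he) (by rwa [hmax, abs_ne_zero]))

lemma tendsto_softTrunc [l.IsCountablyGenerated] (he0 : ∀ i, 0 < e i)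
    (he : Filter.Tendsto e l (𝓝 0)) (t : ℝ) :
    Filter.Tendsto (fun i => softTrunc (e i) t) l (𝓝 t) := by
  have hlim : Filter.Tendsto (fun i => softTrunc (e i) t) l (𝓝 (∫ _ in (0 : ℝ)..t, (1 : ℝ))) := by
    refine intervalIntegral.tendsto_integral_filter_of_dominated_convergence (fun _ => 1)
      (.of_forall fun i => (continuous_one_sub_div_max (he0 i)).aestronglyMeasurable)
      (.of_forall fun i => .of_forall fun s _ => ?_) intervalIntegrable_const ?_
    · rw [Real.norm_of_nonneg (one_sub_div_max_mem_Icc (he0 i) s).1]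
      exact (one_sub_div_max_mem_Icc (he0 i) s).2
    · filter_upwards [Measure.ae_ne volume (0 : ℝ)] with s hs _
      exact tendsto_one_sub_div_max he hs
  simpa using hlim

variable {α : Type*} {U : Set α} {f : α → ℝ}

/-- Soft truncation of `f` in `U`, extended by zero. When `f` has zero boundary values this is a
compactly supported `C¹` function, approximating `f` as `ε → 0`. -/
noncomputable def truncOn (U : Set α) (f : α → ℝ) (ε : ℝ) : α → ℝ :=
  U.indicator fun x => softTrunc ε (f x)

lemma abs_truncOn_le (hε : 0 < ε) (x : α) : |truncOn U f ε x| ≤ |f x| := by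
  unfold truncOn indicator
  split_ifs
  · exact abs_softTrunc_le hε _
  · simp

lemma tendsto_truncOn [l.IsCountablyGenerated] (he0 : ∀ i, 0 < e i)
    (he : Filter.Tendsto e l (𝓝 0)) {x : α} (hx : x ∈ U) :
    Filter.Tendsto (fun i => truncOn U f (e i) x) l (𝓝 (f x)) := by
  simp only [truncOn, indicator_of_mem hx]
  exact tendsto_softTrunc he0 he (f x)

end SoftTruncation

section ZeroBoundaryValues

variable {E : Type*} [NormedAddCommGroup E] [NormedSpace ℝ E] {U : Set E} {f : E → ℝ} {ε : ℝ}

/-- `f` is of class `C¹` in `U`, continuous up to the boundary, and vanishes on the boundary. -/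
structure C1ZeroBoundary (U : Set E) (f : E → ℝ) : Prop where
  contDiffOn : ContDiffOn ℝ 1 f U
  continuousOn : ContinuousOn f (closure U)
  eq_zero : ∀ x ∈ frontier U, f x = 0

lemma fderiv_truncOn (hU : IsOpen U) (hε : 0 < ε) {x : E} (hx : x ∈ U)
    (hf : DifferentiableAt ℝ f x) :
    fderiv ℝ (truncOn U f ε) x = (1 - ε / max |f x| ε) • fderiv ℝ f x := by
  have heq : truncOn U f ε =ᶠ[𝓝 x] softTrunc ε ∘ f := eqOn_indicator.eventuallyEq_of_mem
    (hU.mem_nhds hx)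
  rw [heq.fderiv_eq]
  exact ((hasDerivAt_softTrunc hε (f x)).comp_hasFDerivAt x hf.hasFDerivAt).fderiv

lemma norm_fderiv_truncOn_le (hU : IsOpen U) (hε : 0 < ε) {x : E} (hx : x ∈ U)
    (hf : DifferentiableAt ℝ f x) : ‖fderiv ℝ (truncOn U f ε) x‖ ≤ ‖fderiv ℝ f x‖ := by
  obtain ⟨hnonneg, hle⟩ := one_sub_div_max_mem_Icc hε (f x)
  rw [fderiv_truncOn hU hε hx hf, norm_smul, Real.norm_of_nonneg hnonneg]
  exact mul_le_of_le_one_left (norm_nonneg _) hle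

namespace C1ZeroBoundary

lemma differentiableAt (hf : C1ZeroBoundary U f) (hU : IsOpen U) {x : E} (hx : x ∈ U) :
    DifferentiableAt ℝ f x :=
  (hf.contDiffOn.contDiffAt (hU.mem_nhds hx)).differentiableAt one_ne_zero

lemma tsupport_truncOn_subset (hf : C1ZeroBoundary U f) (hε : 0 < ε) :
    tsupport (truncOn U f ε) ⊆ closure U ∩ (fun x => |f x|) ⁻¹' Ici ε := by
  refine closure_minimal (fun x hx => ?_) (hf.continuousOn.abs.preimage_isClosed_of_isClosed
    isClosed_closure isClosed_Ici)
  have hxU : x ∈ U := mem_of_indicator_ne_zero hx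
  refine ⟨subset_closure hxU, mem_preimage.2 (mem_Ici.2 (not_lt.1 fun hlt => hx ?_))⟩
  rw [truncOn, indicator_of_mem hxU, softTrunc_eq_zero hε hlt.le]

lemma tsupport_truncOn_subset_self (hf : C1ZeroBoundary U f) (hε : 0 < ε) :
    tsupport (truncOn U f ε) ⊆ U := by
  intro x hx
  obtain ⟨hxU, hxε⟩ := hf.tsupport_truncOn_subset hε hx
  by_contra hxn
  have hfx := hf.eq_zero x ⟨hxU, fun hxi => hxn (interior_subset hxi)⟩
  rw [mem_preimage, mem_Ici, hfx, abs_zero] at hxε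
  exact hε.not_ge hxε

lemma hasCompactSupport_truncOn [ProperSpace E] (hf : C1ZeroBoundary U f)
    (hUb : Bornology.IsBounded U) (hε : 0 < ε) : HasCompactSupport (truncOn U f ε) :=
  hUb.isCompact_closure.of_isClosed_subset (isClosed_tsupport _)
    ((hf.tsupport_truncOn_subset hε).trans inter_subset_left)

lemma contDiff_truncOn (hf : C1ZeroBoundary U f) (hU : IsOpen U) (hε : 0 < ε) :
    ContDiff ℝ 1 (truncOn U f ε) := by
  refine contDiff_iff_contDiffAt.2 fun x => ?_
  by_cases hx : x ∈ U
  · have heq : truncOn U f ε =ᶠ[𝓝 x] softTrunc ε ∘ f :=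
      eqOn_indicator.eventuallyEq_of_mem (hU.mem_nhds hx)
    exact ((contDiff_softTrunc hε).contDiffAt.comp x
      (hf.contDiffOn.contDiffAt (hU.mem_nhds hx))).congr_of_eventuallyEq heq
  · have hxs : x ∉ tsupport (truncOn U f ε) := fun h => hx (hf.tsupport_truncOn_subset_self hε h)
    exact contDiffAt_const.congr_of_eventuallyEq (notMem_tsupport_iff_eventuallyEq.1 hxs)

end C1ZeroBoundary

variable [MeasurableSpace E] [BorelSpace E] [FiniteDimensional ℝ E] (μ : Measure E)
  [μ.IsAddHaarMeasure]

/- On the zero set `f` is approximated by the zero linear map with constant `0`; multiplying by a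
fixed vector turns `f` into a self-map of `E`, as the library lemma requires. -/
lemma ae_fderiv_eq_zero_of_eq_zero (hU : IsOpen U) (hf : ∀ x ∈ U, DifferentiableAt ℝ f x) :
    ∀ᵐ x ∂μ.restrict U, f x = 0 → fderiv ℝ f x = 0 := by
  rcases subsingleton_or_nontrivial E with _ | _
  · exact .of_forall fun x _ => Subsingleton.elim _ _
  obtain ⟨e, he⟩ := exists_ne (0 : E)
  set Z := U ∩ f ⁻¹' {0}
  have hcont : ContinuousOn f U := fun x hx => (hf x hx).continuousAt.continuousWithinAt
  have hZ : MeasurableSet Z := by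
    have hcompl := (hcont.isOpen_inter_preimage hU isOpen_compl_singleton (t := {0}ᶜ)).measurableSet
    convert hU.measurableSet.diff hcompl using 1
    ext x
    simp [Z]
  have happrox : ApproximatesLinearOn (fun x => f x • e) (0 : E →L[ℝ] E) Z 0 := fun x hx y hy => by
    simp [show f x = 0 from hx.2, show f y = 0 from hy.2]
  have hae := happrox.norm_fderiv_sub_le (μ := μ) hZ (fun x => (fderiv ℝ f x).smulRight e)
    fun x hx => ((hf x hx.1).hasFDerivAt.smul_const e).hasFDerivWithinAt
  rw [ae_restrict_iff' hZ] at hae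
  rw [ae_restrict_iff' hU.measurableSet]
  filter_upwards [hae] with x hx hxU hx0
  simpa [he] using hx ⟨hxU, hx0⟩

lemma tendsto_fderiv_truncOn (hU : IsOpen U) (hf : ∀ x ∈ U, DifferentiableAt ℝ f x)
    {ι : Type*} {l : Filter ι} {e : ι → ℝ} (he0 : ∀ i, 0 < e i) (he : Filter.Tendsto e l (𝓝 0)) :
    ∀ᵐ x ∂μ.restrict U,
      Filter.Tendsto (fun i => fderiv ℝ (truncOn U f (e i)) x) l (𝓝 (fderiv ℝ f x)) := by
  filter_upwards [ae_fderiv_eq_zero_of_eq_zero μ hU hf, ae_restrict_mem hU.measurableSet]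
    with x hx0 hxU
  simp only [fderiv_truncOn hU (he0 _) hxU (hf x hxU)]
  rcases eq_or_ne (f x) 0 with hfx | hfx
  · simpa [hx0 hfx] using tendsto_const_nhds
  · simpa using (tendsto_one_sub_div_max he hfx).smul_const (fderiv ℝ f x)

end ZeroBoundaryValues

section SmoothAbs

/-- A `C¹`, `1`-Lipschitz approximation of the absolute value from below, exact in the limit
`η → 0`. -/
noncomputable def smoothAbs (η t : ℝ) : ℝ := √(t ^ 2 + η ^ 2) - η

variable {η : ℝ}

lemma contDiff_smoothAbs (hη : 0 < η) : ContDiff ℝ 1 (smoothAbs η) :=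
  (ContDiff.sqrt (by fun_prop) fun t => by positivity).sub contDiff_const

lemma smoothAbs_zero (hη : 0 < η) : smoothAbs η 0 = 0 := by
  simp [smoothAbs, Real.sqrt_sq hη.le]

lemma abs_deriv_smoothAbs_le_one (hη : 0 < η) (t : ℝ) : |deriv (smoothAbs η) t| ≤ 1 := by
  have hderiv : HasDerivAt (smoothAbs η) (2 * t / (2 * √(t ^ 2 + η ^ 2))) t :=
    ((((hasDerivAt_pow 2 t).add_const (η ^ 2)).sqrt (by positivity)).sub_const η).congr_deriv
      (by norm_num)
  rw [hderiv.deriv, mul_div_mul_left _ _ two_ne_zero, abs_div, abs_of_nonneg (Real.sqrt_nonneg _)]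
  exact div_le_one_of_le₀ (Real.abs_le_sqrt (le_add_of_nonneg_right (sq_nonneg η)))
    (Real.sqrt_nonneg _)

lemma abs_smoothAbs_le (hη : 0 < η) (t : ℝ) : |smoothAbs η t| ≤ |t| := by
  have hlower : η ≤ √(t ^ 2 + η ^ 2) := Real.le_sqrt_of_sq_le (by linarith [sq_nonneg t])
  have hupper : √(t ^ 2 + η ^ 2) ≤ |t| + η :=
    Real.sqrt_le_iff.2 ⟨by positivity, by nlinarith [sq_abs t, mul_nonneg (abs_nonneg t) hη.le]⟩
  rw [smoothAbs, abs_of_nonneg (sub_nonneg.2 hlower)]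
  linarith

lemma tendsto_smoothAbs (t : ℝ) : Filter.Tendsto (smoothAbs · t) (𝓝 0) (𝓝 |t|) := by
  have hcont : Continuous (smoothAbs · t) := by unfold smoothAbs; fun_prop
  simpa [smoothAbs, Real.sqrt_sq_eq_abs] using hcont.tendsto 0

end SmoothAbs

section Poincare

variable {E : Type*} [NormedAddCommGroup E] [MeasurableSpace E] {μ : Measure E} {φ f : E → ℝ}
  {U : Set E} {x₀ : E} {r : ℝ}

lemma integrable_norm_fderiv_of_hasCompactSupport [NormedSpace ℝ E] [OpensMeasurableSpace E]
    [IsFiniteMeasureOnCompacts μ] (hφ : ContDiff ℝ 1 φ) (hc : HasCompactSupport φ) :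
    Integrable (fun x => ‖fderiv ℝ φ x‖) μ :=
  (hφ.continuous_fderiv one_ne_zero).norm.integrable_of_hasCompactSupport (hc.fderiv ℝ).norm

variable [InnerProductSpace ℝ E] [FiniteDimensional ℝ E] [BorelSpace E] [μ.IsAddHaarMeasure]

lemma integral_eq_neg_integral_fderiv_mul_inner (hφ : ContDiff ℝ 1 φ) (hc : HasCompactSupport φ)
    {e : E} (he : ‖e‖ = 1) (x₀ : E) :
    ∫ x, φ x ∂μ = -∫ x, fderiv ℝ φ x e * ⟪e, x - x₀⟫_ℝ ∂μ := by
  have hlin (x : E) : HasFDerivAt (fun y => ⟪e, y - x₀⟫_ℝ) (innerSL ℝ e) x :=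
    (innerSL ℝ e).hasFDerivAt.comp x ((hasFDerivAt_id x).sub_const x₀)
  have hlin_e (x : E) : fderiv ℝ (fun y => ⟪e, y - x₀⟫_ℝ) x e = 1 := by
    rw [(hlin x).fderiv, innerSL_apply_apply, real_inner_self_eq_norm_sq, he, one_pow]
  have hφe : Continuous fun x => fderiv ℝ φ x e :=
    (hφ.continuous_fderiv one_ne_zero).clm_apply continuous_const
  have hφec : HasCompactSupport fun x => fderiv ℝ φ x e := hc.fderiv_apply ℝ e
  have hparts := integral_mul_fderiv_eq_neg_fderiv_mul_of_integrable (μ := μ) (f := φ)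
    (g := fun y => ⟪e, y - x₀⟫_ℝ) (v := e)
    ((hφe.mul (by fun_prop)).integrable_of_hasCompactSupport hφec.mul_right)
    (by simpa only [hlin_e, mul_one] using hφ.continuous.integrable_of_hasCompactSupport hc)
    ((hφ.continuous.mul (by fun_prop)).integrable_of_hasCompactSupport hc.mul_right)
    (fun x _ => hφ.differentiable one_ne_zero x) (fun x _ => (hlin x).differentiableAt)
  simpa only [hlin_e, mul_one] using hparts

variable [Nontrivial E]

lemma integral_le_mul_integral_norm_fderiv (hφ : ContDiff ℝ 1 φ) (hc : HasCompactSupport φ)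
    (hs : tsupport φ ⊆ closedBall x₀ r) : ∫ x, φ x ∂μ ≤ r * ∫ x, ‖fderiv ℝ φ x‖ ∂μ := by
  obtain ⟨e, he⟩ := exists_norm_eq E zero_le_one
  have hfc : Continuous (fderiv ℝ φ) := hφ.continuous_fderiv one_ne_zero
  rw [integral_eq_neg_integral_fderiv_mul_inner hφ hc he x₀, ← integral_neg, ← integral_const_mul]
  refine integral_mono ?_ ?_ fun x => ?_
  · exact (((hfc.clm_apply continuous_const).mul (by fun_prop)).integrable_of_hasCompactSupport
      (hc.fderiv_apply ℝ e).mul_right).neg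
  · exact (integrable_norm_fderiv_of_hasCompactSupport hφ hc).const_mul r
  · by_cases hx : x ∈ closedBall x₀ r
    · calc -(fderiv ℝ φ x e * ⟪e, x - x₀⟫_ℝ) ≤ |⟪e, x - x₀⟫_ℝ| * |fderiv ℝ φ x e| := by
            rw [mul_comm, ← abs_mul]
            exact neg_le_abs _
        _ ≤ r * ‖fderiv ℝ φ x‖ := by
            gcongr
            · exact (norm_nonneg _).trans (mem_closedBall_iff_norm.1 hx)
            · calc |⟪e, x - x₀⟫_ℝ| ≤ ‖e‖ * ‖x - x₀‖ := abs_real_inner_le_norm e (x - x₀)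
                _ ≤ r := by rw [he, one_mul]; exact mem_closedBall_iff_norm.1 hx
            · simpa [he] using (fderiv ℝ φ x).le_opNorm e
    · have hzero : fderiv ℝ φ x = 0 :=
        image_eq_zero_of_notMem_tsupport fun h => hx (hs (tsupport_fderiv_subset ℝ h))
      simp [hzero]

lemma integral_comp_le_mul_integral_norm_fderiv (hφ : ContDiff ℝ 1 φ) (hc : HasCompactSupport φ)
    (hs : tsupport φ ⊆ closedBall x₀ r) (hr : 0 ≤ r) {g : ℝ → ℝ} (hg : ContDiff ℝ 1 g)
    (hg0 : g 0 = 0) (hg1 : ∀ t, |deriv g t| ≤ 1) :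
    ∫ x, g (φ x) ∂μ ≤ r * ∫ x, ‖fderiv ℝ φ x‖ ∂μ := by
  have hgφ : ContDiff ℝ 1 (g ∘ φ) := hg.comp hφ
  have hgφc : HasCompactSupport (g ∘ φ) := hc.comp_left hg0
  have hnorm (x : E) : ‖fderiv ℝ (g ∘ φ) x‖ ≤ ‖fderiv ℝ φ x‖ := by
    have hgd : HasDerivAt g (deriv g (φ x)) (φ x) :=
      (hg.differentiable one_ne_zero _).hasDerivAt
    rw [(hgd.comp_hasFDerivAt x (hφ.differentiable one_ne_zero x).hasFDerivAt).fderiv, norm_smul]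
    exact mul_le_of_le_one_left (norm_nonneg _) (hg1 _)
  refine (integral_le_mul_integral_norm_fderiv hgφ hgφc
    ((closure_mono (Function.support_comp_subset hg0 φ)).trans hs)).trans
    (mul_le_mul_of_nonneg_left (integral_mono ?_ ?_ hnorm) hr)
  exacts [integrable_norm_fderiv_of_hasCompactSupport hgφ hgφc,
    integrable_norm_fderiv_of_hasCompactSupport hφ hc]

lemma integral_abs_le_mul_integral_norm_fderiv (hφ : ContDiff ℝ 1 φ) (hc : HasCompactSupport φ)
    (hs : tsupport φ ⊆ closedBall x₀ r) (hr : 0 ≤ r) :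
    ∫ x, |φ x| ∂μ ≤ r * ∫ x, ‖fderiv ℝ φ x‖ ∂μ := by
  have hlim : Filter.Tendsto (fun η => ∫ x, smoothAbs η (φ x) ∂μ) (𝓝[>] 0)
      (𝓝 (∫ x, |φ x| ∂μ)) := by
    refine tendsto_integral_filter_of_dominated_convergence (fun x => |φ x|) ?_ ?_
      (hφ.continuous.abs.integrable_of_hasCompactSupport hc.norm)
      (.of_forall fun x => (tendsto_smoothAbs (φ x)).mono_left nhdsWithin_le_nhds)
    · filter_upwards [self_mem_nhdsWithin] with η hη
      exact ((contDiff_smoothAbs hη).continuous.comp hφ.continuous).aestronglyMeasurable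
    · filter_upwards [self_mem_nhdsWithin] with η hη
      exact .of_forall fun x => abs_smoothAbs_le hη (φ x)
  refine le_of_tendsto hlim ?_
  filter_upwards [self_mem_nhdsWithin] with η hη
  exact integral_comp_le_mul_integral_norm_fderiv hφ hc hs hr (contDiff_smoothAbs hη)
    (smoothAbs_zero hη) (abs_deriv_smoothAbs_le_one hη)

lemma C1ZeroBoundary.setIntegral_abs_truncOn_le (hf : C1ZeroBoundary U f) (hU : IsOpen U)
    (hUr : U ⊆ closedBall x₀ r) (hr : 0 ≤ r)
    (hint : IntegrableOn (fun x => ‖fderiv ℝ f x‖) U μ) {ε : ℝ} (hε : 0 < ε) :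
    ∫ x in U, |truncOn U f ε x| ∂μ ≤ r * ∫ x in U, ‖fderiv ℝ f x‖ ∂μ := by
  have hsupp := hf.tsupport_truncOn_subset_self hε
  have hfderiv_zero (x : E) (hx : x ∉ U) : ‖fderiv ℝ (truncOn U f ε) x‖ = 0 :=
    norm_eq_zero.2 (image_eq_zero_of_notMem_tsupport
      fun h => hx (hsupp (tsupport_fderiv_subset ℝ h)))
  have hC1 := hf.contDiff_truncOn hU hε
  have hcs := hf.hasCompactSupport_truncOn (isBounded_closedBall.subset hUr) hε
  calc ∫ x in U, |truncOn U f ε x| ∂μ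
      = ∫ x, |truncOn U f ε x| ∂μ :=
        setIntegral_eq_integral_of_forall_compl_eq_zero fun x hx => by simp [truncOn, hx]
    _ ≤ r * ∫ x, ‖fderiv ℝ (truncOn U f ε) x‖ ∂μ :=
        integral_abs_le_mul_integral_norm_fderiv hC1 hcs (hsupp.trans hUr) hr
    _ = r * ∫ x in U, ‖fderiv ℝ (truncOn U f ε) x‖ ∂μ := by
        rw [setIntegral_eq_integral_of_forall_compl_eq_zero hfderiv_zero]
    _ ≤ r * ∫ x in U, ‖fderiv ℝ f x‖ ∂μ :=
        mul_le_mul_of_nonneg_left (setIntegral_mono_on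
          (integrable_norm_fderiv_of_hasCompactSupport hC1 hcs).integrableOn hint hU.measurableSet
          fun x hx => norm_fderiv_truncOn_le hU hε hx (hf.differentiableAt hU hx)) hr

lemma C1ZeroBoundary.setIntegral_abs_le (hf : C1ZeroBoundary U f) (hU : IsOpen U)
    (hUr : U ⊆ closedBall x₀ r) (hr : 0 ≤ r)
    (hint : IntegrableOn (fun x => ‖fderiv ℝ f x‖) U μ) :
    ∫ x in U, |f x| ∂μ ≤ r * ∫ x in U, ‖fderiv ℝ f x‖ ∂μ := by
  have hUb : Bornology.IsBounded U := isBounded_closedBall.subset hUr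
  have hfi : IntegrableOn (fun x => |f x|) U μ :=
    (hf.continuousOn.abs.integrableOn_compact hUb.isCompact_closure).mono_set subset_closure
  obtain ⟨e, -, he0, he⟩ := exists_seq_strictAnti_tendsto (0 : ℝ)
  have hlim : Filter.Tendsto (fun n => ∫ x in U, |truncOn U f (e n) x| ∂μ) Filter.atTop
      (𝓝 (∫ x in U, |f x| ∂μ)) := by
    refine tendsto_integral_of_dominated_convergence _
      (fun n => (hf.contDiff_truncOn hU (he0 n)).continuous.abs.aestronglyMeasurable) hfi
      (fun n => .of_forall fun x => ?_) ?_
    · simpa using abs_truncOn_le (he0 n) x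
    · filter_upwards [ae_restrict_mem hU.measurableSet] with x hx
      exact (tendsto_truncOn he0 he hx).abs
  exact le_of_tendsto' hlim fun n => hf.setIntegral_abs_truncOn_le hU hUr hr hint (he0 n)

end Poincare

section WeaklyDivergenceFree

variable {E : Type*} [NormedAddCommGroup E] [NormedSpace ℝ E] [MeasurableSpace E]

/-- The vector field `W` has zero distributional divergence in `U`. -/
def IsWeaklyDivFreeOn (μ : Measure E) (U : Set E) (W : E → E) : Prop :=
  ∀ φ : E → ℝ, ContDiff ℝ (⊤ : ℕ∞) φ → HasCompactSupport φ → tsupport φ ⊆ U →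
    ∫ x in U, fderiv ℝ φ x (W x) ∂μ = 0

variable [BorelSpace E] [FiniteDimensional ℝ E] {μ : Measure E} {φ f : E → ℝ} {U : Set E}
  {W : E → E}

lemma integrableOn_fderiv_apply (hφ : ContDiff ℝ 1 φ) (hc : HasCompactSupport φ)
    (hW : IntegrableOn W U μ) : IntegrableOn (fun x => fderiv ℝ φ x (W x)) U μ := by
  have hfc := hφ.continuous_fderiv one_ne_zero
  obtain ⟨C, hC⟩ := (hc.fderiv ℝ).exists_bound_of_continuous hfc
  refine (hW.norm.const_mul C).mono' ?_
    (.of_forall fun x => ContinuousLinearMap.le_of_opNorm_le _ (hC x) _)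
  exact (ContinuousLinearMap.apply ℝ ℝ : E →L[ℝ] _).aestronglyMeasurable_comp₂
    hW.aestronglyMeasurable hfc.aestronglyMeasurable

lemma tsupport_normed_convolution_subset [μ.IsAddHaarMeasure] (b : ContDiffBump (0 : E))
    (hφ : Continuous φ) :
    tsupport (convolution (b.normed μ) φ (ContinuousLinearMap.lsmul ℝ ℝ) μ) ⊆
      cthickening b.rOut (tsupport φ) := by
  refine closure_minimal (fun x hx => ?_) isClosed_cthickening
  by_contra hxn
  have hzero (y : E) (hy : y ∈ ball x b.rOut) : φ y = 0 := by
    by_contra hne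
    exact hxn (mem_cthickening_of_dist_le x y _ _ (subset_tsupport φ hne)
      (by rw [dist_comm]; exact (mem_ball.1 hy).le))
  have hx0 : φ x = 0 := hzero x (mem_ball_self b.rOut_pos)
  have hdist := b.dist_normed_convolution_le (μ := μ) (g := φ) (x₀ := x) (ε := 0)
    hφ.aestronglyMeasurable (fun y hy => by rw [hzero y hy, hx0, dist_self])
  rw [hx0] at hdist
  exact hx (dist_le_zero.1 hdist)

lemma norm_fderiv_sub_fderiv_normed_convolution_le [μ.IsAddHaarMeasure]
    (b : ContDiffBump (0 : E)) (hφ : ContDiff ℝ 1 φ) (hc : HasCompactSupport φ) {η : ℝ} {x : E}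
    (hosc : ∀ y ∈ ball x b.rOut, ‖fderiv ℝ φ y - fderiv ℝ φ x‖ ≤ η) :
    ‖fderiv ℝ φ x -
      fderiv ℝ (convolution (b.normed μ) φ (ContinuousLinearMap.lsmul ℝ ℝ) μ) x‖ ≤ η := by
  have hη : 0 ≤ η := (norm_nonneg _).trans (hosc x (mem_ball_self b.rOut_pos))
  have hfc : Continuous (fderiv ℝ φ) := hφ.continuous_fderiv one_ne_zero
  have hb : LocallyIntegrable (b.normed μ) μ := b.continuous_normed.locallyIntegrable
  refine ContinuousLinearMap.opNorm_le_bound _ hη fun v => ?_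
  rw [sub_apply, (hc.hasFDerivAt_convolution_right (ContinuousLinearMap.lsmul ℝ ℝ) hb hφ x).fderiv,
    convolution_precompR_apply _ hb (hc.fderiv ℝ) hfc, norm_sub_rev, ← dist_eq_norm]
  refine b.dist_normed_convolution_le (μ := μ) (g := fun a => fderiv ℝ φ a v) (x₀ := x)
    (hfc.clm_apply continuous_const).aestronglyMeasurable fun y hy => ?_
  rw [dist_eq_norm, ← sub_apply]
  exact ContinuousLinearMap.le_of_opNorm_le _ (hosc y hy) v

lemma exists_smooth_norm_fderiv_sub_le (hU : IsOpen U) (hφ : ContDiff ℝ 1 φ)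
    (hc : HasCompactSupport φ) (hs : tsupport φ ⊆ U) {η : ℝ} (hη : 0 < η) :
    ∃ g : E → ℝ, ContDiff ℝ (⊤ : ℕ∞) g ∧ HasCompactSupport g ∧ tsupport g ⊆ U ∧
      ∀ x, ‖fderiv ℝ φ x - fderiv ℝ g x‖ ≤ η := by
  obtain ⟨d, hd, hdU⟩ := IsCompact.exists_cthickening_subset_open hc hU hs
  have huc : UniformContinuous (fderiv ℝ φ) :=
    (hφ.continuous_fderiv one_ne_zero).uniformContinuous_of_tendsto_cocompact
      (hc.fderiv ℝ).is_zero_at_infty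
  obtain ⟨d', hd', hosc⟩ := Metric.uniformContinuous_iff.1 huc η hη
  have hε : 0 < min d d' := lt_min hd hd'
  let μ : Measure E := Measure.addHaar
  let b : ContDiffBump (0 : E) := ⟨min d d' / 2, min d d', half_pos hε, half_lt_self hε⟩
  have hts := (tsupport_normed_convolution_subset (μ := μ) b hφ.continuous).trans
    (cthickening_mono (min_le_left d d') _)
  refine ⟨convolution (b.normed μ) φ (ContinuousLinearMap.lsmul ℝ ℝ) μ, ?_, ?_, hts.trans hdU,
    fun x => norm_fderiv_sub_fderiv_normed_convolution_le b hφ hc fun y hy => ?_⟩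
  · exact b.hasCompactSupport_normed.contDiff_convolution_left _ b.contDiff_normed
      hφ.continuous.locallyIntegrable
  · exact (IsCompact.cthickening hc).of_isClosed_subset (isClosed_tsupport _) hts
  · rw [← dist_eq_norm]
    exact (hosc ((mem_ball.1 hy).trans_le (min_le_right d d'))).le

lemma IsWeaklyDivFreeOn.integral_fderiv_apply_eq_zero (hdiv : IsWeaklyDivFreeOn μ U W)
    (hU : IsOpen U) (hW : IntegrableOn W U μ) (hφ : ContDiff ℝ 1 φ) (hc : HasCompactSupport φ)
    (hs : tsupport φ ⊆ U) : ∫ x in U, fderiv ℝ φ x (W x) ∂μ = 0 := by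
  have hbound (η : ℝ) (hη : 0 < η) :
      ‖∫ x in U, fderiv ℝ φ x (W x) ∂μ‖ ≤ η * ∫ x in U, ‖W x‖ ∂μ := by
    obtain ⟨g, hg, hgc, hgs, hgη⟩ := exists_smooth_norm_fderiv_sub_le hU hφ hc hs hη
    have hg1 : ContDiff ℝ 1 g := hg.of_le (by exact_mod_cast le_top)
    have heq : ∫ x in U, fderiv ℝ φ x (W x) ∂μ =
        ∫ x in U, (fderiv ℝ φ x (W x) - fderiv ℝ g x (W x)) ∂μ := by
      rw [integral_sub (integrableOn_fderiv_apply hφ hc hW) (integrableOn_fderiv_apply hg1 hgc hW),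
        hdiv g hg hgc hgs, sub_zero]
    rw [heq, ← integral_const_mul]
    refine norm_integral_le_of_norm_le (hW.norm.const_mul η) (.of_forall fun x => ?_)
    rw [← sub_apply]
    exact ContinuousLinearMap.le_of_opNorm_le _ (hgη x) _
  have hlim : Filter.Tendsto (fun η : ℝ => η * ∫ x in U, ‖W x‖ ∂μ) (𝓝[>] 0) (𝓝 0) := by
    simpa using ((continuous_mul_const (∫ x in U, ‖W x‖ ∂μ)).tendsto 0).mono_left
      nhdsWithin_le_nhds
  refine norm_le_zero_iff.1 (ge_of_tendsto hlim ?_)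
  filter_upwards [self_mem_nhdsWithin] with η hη using hbound η hη

lemma C1ZeroBoundary.setIntegral_fderiv_apply_eq_zero [μ.IsAddHaarMeasure]
    (hf : C1ZeroBoundary U f) (hU : IsOpen U)
    (hUb : Bornology.IsBounded U) (hdiv : IsWeaklyDivFreeOn μ U W) (hW : IntegrableOn W U μ)
    (hint : IntegrableOn (fun x => ‖fderiv ℝ f x‖ * ‖W x‖) U μ) :
    ∫ x in U, fderiv ℝ f x (W x) ∂μ = 0 := by
  obtain ⟨e, -, he0, he⟩ := exists_seq_strictAnti_tendsto (0 : ℝ)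
  have hlim : Filter.Tendsto (fun n => ∫ x in U, fderiv ℝ (truncOn U f (e n)) x (W x) ∂μ)
      Filter.atTop (𝓝 (∫ x in U, fderiv ℝ f x (W x) ∂μ)) := by
    refine tendsto_integral_of_dominated_convergence _ (fun n => (integrableOn_fderiv_apply
      (hf.contDiff_truncOn hU (he0 n)) (hf.hasCompactSupport_truncOn hUb (he0 n))
      hW).aestronglyMeasurable) hint (fun n => ?_) ?_
    · filter_upwards [ae_restrict_mem hU.measurableSet] with x hx
      exact ContinuousLinearMap.le_of_opNorm_le _
        (norm_fderiv_truncOn_le hU (he0 n) hx (hf.differentiableAt hU hx)) _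
    · filter_upwards [tendsto_fderiv_truncOn μ hU (fun x hx => hf.differentiableAt hU hx) he0 he]
        with x hx
      exact ((ContinuousLinearMap.apply ℝ ℝ (W x)).continuous.tendsto _).comp hx
  refine tendsto_nhds_unique hlim (tendsto_const_nhds.congr fun n => ?_)
  exact (hdiv.integral_fderiv_apply_eq_zero hU hW (hf.contDiff_truncOn hU (he0 n))
    (hf.hasCompactSupport_truncOn hUb (he0 n)) (hf.tsupport_truncOn_subset_self (he0 n))).symm

end WeaklyDivergenceFree

section Gradient

variable {E : Type*} [NormedAddCommGroup E] [InnerProductSpace ℝ E] [CompleteSpace E]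
  {u : E → ℝ} {U K : Set E} {p : ℝ}

lemma norm_gradient (u : E → ℝ) (x : E) : ‖∇ u x‖ = ‖fderiv ℝ u x‖ := by
  rw [← toDual_gradient, LinearIsometryEquiv.norm_map]

lemma norm_gradient_sub (u w : E → ℝ) (x : E) :
    ‖∇ u x - ∇ w x‖ = ‖fderiv ℝ u x - fderiv ℝ w x‖ := by
  rw [← toDual_gradient, ← toDual_gradient, ← map_sub, LinearIsometryEquiv.norm_map]

lemma continuousOn_gradient_iff_continuousOn_fderiv :
    ContinuousOn (∇ u) U ↔ ContinuousOn (fderiv ℝ u) U := by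
  rw [← toDual_comp_gradient, LinearIsometryEquiv.comp_continuousOn_iff]

lemma contDiffOn_one_of_continuousOn_gradient (hU : IsOpen U)
    (hd : ∀ x ∈ U, DifferentiableAt ℝ u x) (hc : ContinuousOn (∇ u) U) : ContDiffOn ℝ 1 u U := by
  rw [← zero_add 1, contDiffOn_succ_iff_fderiv_of_isOpen hU, contDiffOn_zero]
  exact ⟨fun x hx => (hd x hx).differentiableWithinAt, by simp,
    continuousOn_gradient_iff_continuousOn_fderiv.1 hc⟩

lemma integrableOn_norm_gradient_rpow [MeasurableSpace E] [OpensMeasurableSpace E] {μ : Measure E}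
    [IsFiniteMeasureOnCompacts μ] (hU : IsOpen U) (hu : ContDiffOn ℝ 1 u U) (hK : IsCompact K)
    (hKU : K ⊆ U) (hp : 0 ≤ p) : IntegrableOn (fun x => ‖∇ u x‖ ^ p) K μ :=
  (((continuousOn_gradient_iff_continuousOn_fderiv.2
    (hu.continuousOn_fderiv_of_isOpen hU le_rfl)).mono hKU).norm.rpow_const
      fun _ _ => .inr hp).integrableOn_compact hK

lemma integrableOn_energy [MeasurableSpace E] [OpensMeasurableSpace E] {μ : Measure E}
    [IsFiniteMeasureOnCompacts μ] (hU : IsOpen U) (hu : ContDiffOn ℝ 1 u U) (hK : IsCompact K)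
    (hKU : K ⊆ U) (hp : 0 ≤ p) {F : ℝ → ℝ} (hF : Continuous F) :
    IntegrableOn (fun x => ‖∇ u x‖ ^ p / p + F (u x)) K μ :=
  ((integrableOn_norm_gradient_rpow hU hu hK hKU hp).div_const p).add
    ((hF.comp_continuousOn (hu.continuousOn.mono hKU)).integrableOn_compact hK)

end Gradient

section Cutoff

variable {E : Type*} [NormedAddCommGroup E] {x₀ x : E} {r : ℝ}

lemma norm_fderiv_one_sub_sq_mul_le [NormedSpace ℝ E] {ψ u : E → ℝ}
    (hψd : DifferentiableAt ℝ ψ x) (hud : DifferentiableAt ℝ u x) (hψ : ψ x ∈ Icc (0 : ℝ) 1) :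
    ‖fderiv ℝ (fun y => (1 - ψ y ^ 2) * u y) x‖ ≤
      (1 - ψ x ^ 2) * ‖fderiv ℝ u x‖ + ψ x * (2 * |u x| * ‖fderiv ℝ ψ x‖) := by
  have hderiv : HasFDerivAt (fun y => (1 - ψ y ^ 2) * u y)
      ((1 - ψ x ^ 2) • fderiv ℝ u x + u x • -((2 • ψ x ^ (2 - 1)) • fderiv ℝ ψ x)) x :=
    ((hψd.hasFDerivAt.pow 2).const_sub 1).mul hud.hasFDerivAt
  rw [hderiv.fderiv]
  refine (norm_add_le _ _).trans_eq ?_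
  rw [norm_smul, norm_smul, norm_neg, norm_smul,
    Real.norm_of_nonneg (sub_nonneg.2 (pow_le_one₀ hψ.1 hψ.2)), Real.norm_eq_abs, pow_one,
    Real.norm_of_nonneg (nsmul_nonneg hψ.1 2), two_nsmul]
  ring

/-- The paraboloid with value `1` at `x₀` that vanishes on the sphere of radius `r` about `x₀`;
on the ball of radius `r` it is a cutoff function. -/
noncomputable def paraboloid (x₀ : E) (r : ℝ) (x : E) : ℝ := 1 - ‖x - x₀‖ ^ 2 / r ^ 2

lemma paraboloid_eq_zero (hr : 0 < r) (hx : x ∈ sphere x₀ r) : paraboloid x₀ r x = 0 := by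
  rw [paraboloid, mem_sphere_iff_norm.1 hx, div_self (by positivity), sub_self]

lemma paraboloid_mem_Icc (hr : 0 < r) (hx : x ∈ ball x₀ r) :
    paraboloid x₀ r x ∈ Icc (0 : ℝ) 1 := by
  have hle : ‖x - x₀‖ ^ 2 / r ^ 2 ≤ 1 := div_le_one_of_le₀
    (pow_le_pow_left₀ (norm_nonneg _) (mem_ball_iff_norm.1 hx).le 2) (sq_nonneg r)
  exact ⟨sub_nonneg.2 hle, sub_le_self 1 (by positivity)⟩

lemma three_quarters_le_paraboloid (hr : 0 < r) (hx : x ∈ ball x₀ (r / 2)) :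
    3 / 4 ≤ paraboloid x₀ r x := by
  have hle : ‖x - x₀‖ ^ 2 / r ^ 2 ≤ 1 / 4 := by
    rw [div_le_iff₀ (by positivity)]
    calc ‖x - x₀‖ ^ 2 ≤ (r / 2) ^ 2 :=
          pow_le_pow_left₀ (norm_nonneg _) (mem_ball_iff_norm.1 hx).le 2
      _ = 1 / 4 * r ^ 2 := by ring
  rw [paraboloid]
  linarith

variable [InnerProductSpace ℝ E]

lemma norm_gradient_one_sub_sq_mul_rpow_le [CompleteSpace E] {p M L : ℝ} (hp1 : 1 ≤ p)
    (hp2 : p ≤ 2) {ψ u : E → ℝ} (hψd : DifferentiableAt ℝ ψ x) (hud : DifferentiableAt ℝ u x)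
    (hψ : ψ x ∈ Icc (0 : ℝ) 1) (hL : ‖fderiv ℝ ψ x‖ ≤ L) (hM : |u x| ≤ M) :
    ‖∇ (fun y => (1 - ψ y ^ 2) * u y) x‖ ^ p ≤
      (1 - ψ x ^ 2) * ‖∇ u x‖ ^ p + (2 * M * L) ^ p := by
  have hψ0 : 0 ≤ ψ x := hψ.1
  have hM0 : 0 ≤ M := (abs_nonneg _).trans hM
  have hL0 : 0 ≤ L := (norm_nonneg _).trans hL
  refine le_trans (Real.rpow_le_rpow (norm_nonneg _) ?_ (by linarith))
    (convex_combination_rpow_le hp1 hp2 hψ (norm_nonneg (∇ u x))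
      (by positivity : 0 ≤ 2 * M * L))
  rw [norm_gradient, norm_gradient]
  refine (norm_fderiv_one_sub_sq_mul_le hψd hud hψ).trans ?_
  gcongr

lemma energy_one_sub_sq_mul_le [CompleteSpace E] {p M L : ℝ} (hp1 : 1 ≤ p) (hp2 : p ≤ 2)
    {F : ℝ → ℝ} (hFmul : ∀ c ∈ Icc (0 : ℝ) 1, ∀ t, F (c * t) ≤ F t) {ψ u : E → ℝ}
    (hψd : DifferentiableAt ℝ ψ x) (hud : DifferentiableAt ℝ u x) (hψ : ψ x ∈ Icc (0 : ℝ) 1)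
    (hL : ‖fderiv ℝ ψ x‖ ≤ L) (hM : |u x| ≤ M) :
    ‖∇ (fun y => (1 - ψ y ^ 2) * u y) x‖ ^ p / p + F ((1 - ψ x ^ 2) * u x) ≤
      (‖∇ u x‖ ^ p / p + F (u x)) + ((2 * M * L) ^ p - ψ x ^ 2 * ‖∇ u x‖ ^ p) / p := by
  have hpot : F ((1 - ψ x ^ 2) * u x) ≤ F (u x) :=
    hFmul _ ⟨sub_nonneg.2 (pow_le_one₀ hψ.1 hψ.2), sub_le_self _ (sq_nonneg _)⟩ _
  have hgrad := div_le_div_of_nonneg_right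
    (norm_gradient_one_sub_sq_mul_rpow_le hp1 hp2 hψd hud hψ hL hM) (by linarith : 0 ≤ p)
  calc _ ≤ ((1 - ψ x ^ 2) * ‖∇ u x‖ ^ p + (2 * M * L) ^ p) / p + F (u x) := add_le_add hgrad hpot
    _ = _ := by ring

lemma contDiff_paraboloid (x₀ : E) (r : ℝ) : ContDiff ℝ 1 (paraboloid x₀ r) :=
  contDiff_const.sub (((contDiff_id.sub contDiff_const).norm_sq ℝ).div_const _)

lemma norm_fderiv_paraboloid_le (hr : 0 < r) (hx : x ∈ ball x₀ r) :
    ‖fderiv ℝ (paraboloid x₀ r) x‖ ≤ 2 / r := by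
  have hderiv : HasFDerivAt (paraboloid x₀ r) (-((r ^ 2)⁻¹ • 2 • innerSL ℝ (x - x₀))) x := by
    unfold paraboloid
    simpa [div_eq_mul_inv] using
      ((((hasFDerivAt_id x).sub_const x₀).norm_sq).mul_const (r ^ 2)⁻¹).const_sub 1
  rw [hderiv.fderiv, norm_neg, norm_smul, Real.norm_of_nonneg (by positivity),
    ← Nat.cast_smul_eq_nsmul ℝ, norm_smul, innerSL_apply_norm, inv_mul_le_iff₀ (by positivity)]
  calc ‖((2 : ℕ) : ℝ)‖ * ‖x - x₀‖ ≤ 2 * r := by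
        gcongr
        · simp
        · exact (mem_ball_iff_norm.1 hx).le
    _ = r ^ 2 * (2 / r) := by field_simp

end Cutoff

section Caccioppoli

variable {N : ℕ} {p : ℝ} {F : ℝ → ℝ} {Ω : Set (EuclideanSpace ℝ (Fin N))}
  {u : EuclideanSpace ℝ (Fin N) → ℝ} {x₀ : EuclideanSpace ℝ (Fin N)} {r M : ℝ}

namespace APLocMin

lemma contDiffOn (hu : APLocMin N p F Ω u) (hΩ : IsOpen Ω) : ContDiffOn ℝ 1 u Ω :=
  contDiffOn_one_of_continuousOn_gradient hΩ hu.1 hu.2.1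

lemma setIntegral_energy_le (hu : APLocMin N p F Ω u) (hΩ : IsOpen Ω) (hr : 0 < r)
    (hsub : closedBall x₀ r ⊆ Ω) {v : EuclideanSpace ℝ (Fin N) → ℝ} (hv : ContDiffOn ℝ 1 v Ω)
    (heq : EqOn v u (sphere x₀ r)) :
    ∫ x in ball x₀ r, (‖∇ u x‖ ^ p / p + F (u x)) ≤
      ∫ x in ball x₀ r, (‖∇ v x‖ ^ p / p + F (v x)) := by
  obtain ⟨L, hL⟩ := (isCompact_closedBall x₀ r).exists_bound_of_continuousOn
    ((hv.continuousOn_fderiv_of_isOpen hΩ le_rfl).mono hsub)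
  have hlip : LipschitzOnWith L.toNNReal v (closedBall x₀ r) :=
    (convex_closedBall x₀ r).lipschitzOnWith_of_nnnorm_fderiv_le (𝕜 := ℝ)
      (fun x hx => (hv.contDiffAt (hΩ.mem_nhds (hsub hx))).differentiableAt one_ne_zero)
      fun x hx => NNReal.coe_le_coe.1 ((hL x hx).trans (Real.le_coe_toNNReal L))
  rw [← closure_ball x₀ hr.ne'] at hsub hlip
  exact hu.2.2.2 x₀ r hr hsub v _ hlip heq

/- The competitor `(1 - ψ²) u` does not increase the potential energy, and by convexity it loses
the part `ψ² ‖∇u‖^p` of the gradient energy. -/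
lemma setIntegral_sq_mul_norm_gradient_rpow_le (hu : APLocMin N p F Ω u) (hΩ : IsOpen Ω)
    (hp1 : 1 ≤ p) (hp2 : p ≤ 2) (hF : Continuous F)
    (hFmul : ∀ c ∈ Icc (0 : ℝ) 1, ∀ t, F (c * t) ≤ F t) (hr : 0 < r)
    (hsub : closedBall x₀ r ⊆ Ω) (hM : ∀ x ∈ ball x₀ r, |u x| ≤ M)
    {ψ : EuclideanSpace ℝ (Fin N) → ℝ} {L : ℝ} (hψd : ContDiff ℝ 1 ψ)
    (hψ0 : ∀ x ∈ sphere x₀ r, ψ x = 0) (hψ : ∀ x ∈ ball x₀ r, ψ x ∈ Icc (0 : ℝ) 1)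
    (hL : ∀ x ∈ ball x₀ r, ‖fderiv ℝ ψ x‖ ≤ L) :
    ∫ x in ball x₀ r, ψ x ^ 2 * ‖∇ u x‖ ^ p ≤ (2 * M * L) ^ p * volume.real (ball x₀ r) := by
  set v : EuclideanSpace ℝ (Fin N) → ℝ := fun x => (1 - ψ x ^ 2) * u x
  have huC : ContDiffOn ℝ 1 u Ω := hu.contDiffOn hΩ
  have hvC : ContDiffOn ℝ 1 v Ω := (contDiff_const.sub (hψd.pow 2)).contDiffOn.mul huC
  have hmin := hu.setIntegral_energy_le hΩ hr hsub hvC fun x hx => by simp [v, hψ0 x hx]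
  have hK := isCompact_closedBall x₀ r
  have hp0 : 0 < p := by linarith
  have henergy_u := (integrableOn_energy (μ := volume) hΩ huC hK hsub hp0.le hF).mono_set
    ball_subset_closedBall
  have henergy_v := (integrableOn_energy (μ := volume) hΩ hvC hK hsub hp0.le hF).mono_set
    ball_subset_closedBall
  have hloss : IntegrableOn (fun x => ψ x ^ 2 * ‖∇ u x‖ ^ p) (ball x₀ r) :=
    ((integrableOn_norm_gradient_rpow hΩ huC hK hsub hp0.le).continuousOn_mul
      (hψd.continuous.pow 2).continuousOn hK).mono_set ball_subset_closedBall
  have hconst : IntegrableOn (fun _ => (2 * M * L) ^ p) (ball x₀ r) :=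
    integrableOn_const measure_ball_lt_top.ne
  have hgain : IntegrableOn (fun x => ((2 * M * L) ^ p - ψ x ^ 2 * ‖∇ u x‖ ^ p) / p) (ball x₀ r) :=
    (hconst.sub hloss).div_const p
  have hcomp : ∫ x in ball x₀ r, (‖∇ v x‖ ^ p / p + F (v x)) ≤
      ∫ x in ball x₀ r, ((‖∇ u x‖ ^ p / p + F (u x)) +
        ((2 * M * L) ^ p - ψ x ^ 2 * ‖∇ u x‖ ^ p) / p) :=
    setIntegral_mono_on henergy_v (henergy_u.add hgain) measurableSet_ball fun x hx =>
      energy_one_sub_sq_mul_le hp1 hp2 hFmul (hψd.differentiable one_ne_zero x)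
        (hu.1 x (hsub (ball_subset_closedBall hx))) (hψ x hx) (hL x hx) (hM x hx)
  rw [integral_add henergy_u hgain, integral_div, integral_sub hconst hloss,
    setIntegral_const, smul_eq_mul] at hcomp
  have hdiff := (le_add_iff_nonneg_right _).1 (hmin.trans hcomp)
  rw [le_div_iff₀ hp0] at hdiff
  linarith

lemma caccioppoli (hu : APLocMin N p F Ω u) (hΩ : IsOpen Ω) (hp1 : 1 ≤ p) (hp2 : p ≤ 2)
    (hF : Continuous F) (hFmul : ∀ c ∈ Icc (0 : ℝ) 1, ∀ t, F (c * t) ≤ F t) (hr : 0 < r)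
    (hsub : closedBall x₀ r ⊆ Ω) (hM : ∀ x ∈ ball x₀ r, |u x| ≤ M) :
    9 / 16 * ∫ x in ball x₀ (r / 2), ‖∇ u x‖ ^ p ≤
      (4 * M / r) ^ p * volume.real (ball x₀ r) := by
  have hp0 : 0 ≤ p := by linarith
  have hhalf : ball x₀ (r / 2) ⊆ ball x₀ r := ball_subset_ball (by linarith)
  have hgrad := integrableOn_norm_gradient_rpow (μ := volume) hΩ (hu.contDiffOn hΩ)
    (isCompact_closedBall x₀ r) hsub hp0
  have hloss : IntegrableOn (fun x => paraboloid x₀ r x ^ 2 * ‖∇ u x‖ ^ p) (ball x₀ r) :=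
    (hgrad.continuousOn_mul ((contDiff_paraboloid x₀ r).continuous.pow 2).continuousOn
      (isCompact_closedBall x₀ r)).mono_set ball_subset_closedBall
  calc 9 / 16 * ∫ x in ball x₀ (r / 2), ‖∇ u x‖ ^ p
      = ∫ x in ball x₀ (r / 2), 9 / 16 * ‖∇ u x‖ ^ p := (integral_const_mul _ _).symm
    _ ≤ ∫ x in ball x₀ (r / 2), paraboloid x₀ r x ^ 2 * ‖∇ u x‖ ^ p := by
        refine setIntegral_mono_on
          ((hgrad.mono_set (hhalf.trans ball_subset_closedBall)).const_mul _)
          (hloss.mono_set hhalf) measurableSet_ball fun x hx => ?_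
        gcongr
        nlinarith [three_quarters_le_paraboloid hr hx]
    _ ≤ ∫ x in ball x₀ r, paraboloid x₀ r x ^ 2 * ‖∇ u x‖ ^ p :=
        setIntegral_mono_set hloss (.of_forall fun x => by positivity) hhalf.eventuallyLE
    _ ≤ (2 * M * (2 / r)) ^ p * volume.real (ball x₀ r) :=
        hu.setIntegral_sq_mul_norm_gradient_rpow_le hΩ hp1 hp2 hF hFmul hr hsub hM
          (contDiff_paraboloid x₀ r) (fun x hx => paraboloid_eq_zero hr hx)
          (fun x hx => paraboloid_mem_Icc hr hx) fun x hx => norm_fderiv_paraboloid_le hr hx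
    _ = (4 * M / r) ^ p * volume.real (ball x₀ r) := by ring_nf

end APLocMin

end Caccioppoli

section Replacement

lemma norm_sub_mul_norm_flux_le {E : Type*} [NormedAddCommGroup E] [NormedSpace ℝ E] {p : ℝ}
    (hp : 1 < p) (a b : E) : ‖a - b‖ * ‖‖b‖ ^ (p - 2) • b‖ ≤ 2 * (‖a‖ ^ p + ‖b‖ ^ p) := by
  set m := max ‖a‖ ‖b‖
  have hm : 0 ≤ m := (norm_nonneg a).trans (le_max_left _ _)
  calc ‖a - b‖ * ‖‖b‖ ^ (p - 2) • b‖ ≤ (m + m) * m ^ (p - 1) := by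
        rw [norm_rpow_smul_self hp]
        refine mul_le_mul
          ((norm_sub_le a b).trans (add_le_add (le_max_left _ _) (le_max_right _ _)))
          (Real.rpow_le_rpow (norm_nonneg b) (le_max_right _ _) (by linarith)) (by positivity)
          (by positivity)
    _ = 2 * (m ^ (p - 1) * m) := by ring
    _ = 2 * m ^ p := by rw [← Real.rpow_add_one' hm (by linarith), sub_add_cancel]
    _ ≤ 2 * (‖a‖ ^ p + ‖b‖ ^ p) :=
        mul_le_mul_of_nonneg_left (max_rpow_le_add (norm_nonneg a) (norm_nonneg b) p) two_pos.le

variable {E : Type*} [NormedAddCommGroup E] [InnerProductSpace ℝ E] [CompleteSpace E]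
  [MeasurableSpace E]

/-- `u` is `C¹` in `U`, continuous up to the boundary, and has finite `p`-Dirichlet energy. -/
structure HasFiniteEnergyOn (p : ℝ) (μ : Measure E) (U : Set E) (u : E → ℝ) : Prop where
  differentiableAt : ∀ x ∈ U, DifferentiableAt ℝ u x
  continuousOn_gradient : ContinuousOn (fun x => ∇ u x) U
  continuousOn_closure : ContinuousOn u (closure U)
  integrableOn : IntegrableOn (fun x => ‖∇ u x‖ ^ p) U μ

/-- `w` is the `p`-harmonic function in `U` with the boundary values of `u`. The equation
`div (‖∇w‖^(p-2) ∇w) = 0` is understood in the sense of distributions. -/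
structure IsPHarmonicReplacement (p : ℝ) (μ : Measure E) (U : Set E) (u w : E → ℝ) : Prop
    extends HasFiniteEnergyOn p μ U w where
  weak_eq : ∀ φ : E → ℝ, ContDiff ℝ (⊤ : ℕ∞) φ → HasCompactSupport φ → tsupport φ ⊆ U →
    ∫ x in U, ‖∇ w x‖ ^ (p - 2) * ⟪∇ w x, ∇ φ x⟫_ℝ ∂μ = 0
  eqOn_frontier : EqOn w u (frontier U)

variable {p : ℝ} {μ : Measure E} {U : Set E} {u w : E → ℝ}

namespace HasFiniteEnergyOn

lemma c1ZeroBoundary_sub (hu : HasFiniteEnergyOn p μ U u) (hw : HasFiniteEnergyOn p μ U w)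
    (hU : IsOpen U) (heq : EqOn w u (frontier U)) : C1ZeroBoundary U fun x => u x - w x where
  contDiffOn :=
    (contDiffOn_one_of_continuousOn_gradient hU hu.differentiableAt hu.continuousOn_gradient).sub
      (contDiffOn_one_of_continuousOn_gradient hU hw.differentiableAt hw.continuousOn_gradient)
  continuousOn := hu.continuousOn_closure.sub hw.continuousOn_closure
  eq_zero _ hx := sub_eq_zero.2 (heq hx).symm

lemma fderiv_sub (hu : HasFiniteEnergyOn p μ U u) (hw : HasFiniteEnergyOn p μ U w) {x : E}
    (hx : x ∈ U) : fderiv ℝ (fun y => u y - w y) x = fderiv ℝ u x - fderiv ℝ w x :=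
  fderiv_fun_sub (hu.differentiableAt x hx) (hw.differentiableAt x hx)

lemma norm_fderiv_sub (hu : HasFiniteEnergyOn p μ U u) (hw : HasFiniteEnergyOn p μ U w) {x : E}
    (hx : x ∈ U) : ‖fderiv ℝ (fun y => u y - w y) x‖ = ‖∇ u x - ∇ w x‖ := by
  rw [hu.fderiv_sub hw hx, norm_gradient_sub]

variable [BorelSpace E] [FiniteDimensional ℝ E]

lemma aestronglyMeasurable_gradient (hu : HasFiniteEnergyOn p μ U u) (hU : IsOpen U) :
    AEStronglyMeasurable (fun x => ∇ u x) (μ.restrict U) :=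
  hu.continuousOn_gradient.aestronglyMeasurable hU.measurableSet

lemma aestronglyMeasurable_flux (hp : 1 < p) (hu : HasFiniteEnergyOn p μ U u) (hU : IsOpen U) :
    AEStronglyMeasurable (fun x => ‖∇ u x‖ ^ (p - 2) • ∇ u x) (μ.restrict U) :=
  (continuous_norm_rpow_smul_self hp).comp_aestronglyMeasurable
    (hu.aestronglyMeasurable_gradient hU)

lemma integrableOn_norm_gradient_sub_mul_norm_flux (hp : 1 < p) (hu : HasFiniteEnergyOn p μ U u)
    (hw : HasFiniteEnergyOn p μ U w) (hU : IsOpen U) :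
    IntegrableOn (fun x => ‖∇ u x - ∇ w x‖ * ‖‖∇ w x‖ ^ (p - 2) • ∇ w x‖) U μ := by
  refine ((hu.integrableOn.add hw.integrableOn).const_mul 2).mono'
    (((hu.aestronglyMeasurable_gradient hU).sub (hw.aestronglyMeasurable_gradient hU)).norm.mul
      (hw.aestronglyMeasurable_flux hp hU).norm) (.of_forall fun x => ?_)
  rw [Real.norm_of_nonneg (by positivity)]
  exact norm_sub_mul_norm_flux_le hp _ _

variable [IsFiniteMeasureOnCompacts μ]

lemma integrableOn_flux (hp : 1 < p) (hu : HasFiniteEnergyOn p μ U u) (hU : IsOpen U)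
    (hUb : Bornology.IsBounded U) :
    IntegrableOn (fun x => ‖∇ u x‖ ^ (p - 2) • ∇ u x) U μ := by
  have hone : IntegrableOn (fun _ => (1 : ℝ)) U μ := integrableOn_const hUb.measure_lt_top.ne
  refine (hone.add hu.integrableOn).mono' (hu.aestronglyMeasurable_flux hp hU)
    (.of_forall fun x => ?_)
  rw [norm_rpow_smul_self hp]
  exact rpow_le_one_add_rpow (norm_nonneg _) (by linarith) (by linarith)

lemma integrableOn_gradient (hp : 1 ≤ p) (hu : HasFiniteEnergyOn p μ U u) (hU : IsOpen U)
    (hUb : Bornology.IsBounded U) : IntegrableOn (fun x => ∇ u x) U μ := by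
  have hone : IntegrableOn (fun _ => (1 : ℝ)) U μ := integrableOn_const hUb.measure_lt_top.ne
  refine (hone.add hu.integrableOn).mono' (hu.aestronglyMeasurable_gradient hU)
    (.of_forall fun x => ?_)
  simpa using rpow_le_one_add_rpow (norm_nonneg (∇ u x)) zero_le_one hp

lemma integrableOn_norm_gradient_sub (hp : 1 ≤ p) (hu : HasFiniteEnergyOn p μ U u)
    (hw : HasFiniteEnergyOn p μ U w) (hU : IsOpen U) (hUb : Bornology.IsBounded U) :
    IntegrableOn (fun x => ‖∇ u x - ∇ w x‖) U μ :=
  ((hu.integrableOn_gradient hp hU hUb).sub (hw.integrableOn_gradient hp hU hUb)).norm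

lemma integrableOn_comp {F : ℝ → ℝ} (hF : Continuous F) (hu : HasFiniteEnergyOn p μ U u)
    (hUb : Bornology.IsBounded U) : IntegrableOn (fun x => F (u x)) U μ :=
  ((hF.comp_continuousOn hu.continuousOn_closure).integrableOn_compact
    hUb.isCompact_closure).mono_set subset_closure

end HasFiniteEnergyOn

namespace IsPHarmonicReplacement

lemma isWeaklyDivFreeOn (hw : IsPHarmonicReplacement p μ U u w) :
    IsWeaklyDivFreeOn μ U fun x => ‖∇ w x‖ ^ (p - 2) • ∇ w x := fun φ hφ hc hs => by
  rw [← hw.weak_eq φ hφ hc hs]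
  simp_rw [map_smul, smul_eq_mul, inner_gradient_right, conj_trivial]

variable [BorelSpace E] [FiniteDimensional ℝ E] [μ.IsAddHaarMeasure]

lemma setIntegral_inner_flux_gradient_sub_eq_zero (hp : 1 < p)
    (hw : IsPHarmonicReplacement p μ U u w) (hu : HasFiniteEnergyOn p μ U u) (hU : IsOpen U)
    (hUb : Bornology.IsBounded U) :
    ∫ x in U, ⟪‖∇ w x‖ ^ (p - 2) • ∇ w x, ∇ u x - ∇ w x⟫_ℝ ∂μ = 0 := by
  have hw' := hw.toHasFiniteEnergyOn
  have horth := (hu.c1ZeroBoundary_sub hw' hU hw.eqOn_frontier).setIntegral_fderiv_apply_eq_zero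
    hU hUb hw.isWeaklyDivFreeOn (hw'.integrableOn_flux hp hU hUb)
    ((hu.integrableOn_norm_gradient_sub_mul_norm_flux hp hw' hU).congr_fun
      (fun x hx => by simp only [hu.norm_fderiv_sub hw' hx]) hU.measurableSet)
  rw [← horth]
  refine setIntegral_congr_fun hU.measurableSet fun x hx => ?_
  simp only [hu.fderiv_sub hw' hx, sub_apply, inner_sub_right, inner_gradient_right, conj_trivial]

lemma setIntegral_abs_sub_le [Nontrivial E] (hp : 1 ≤ p) (hw : IsPHarmonicReplacement p μ U u w)
    (hu : HasFiniteEnergyOn p μ U u) (hU : IsOpen U) {x₀ : E} {r : ℝ}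
    (hUr : U ⊆ closedBall x₀ r) (hr : 0 ≤ r) :
    ∫ x in U, |u x - w x| ∂μ ≤ r * ∫ x in U, ‖∇ u x - ∇ w x‖ ∂μ := by
  have hw' := hw.toHasFiniteEnergyOn
  have hUb := isBounded_closedBall.subset hUr
  have hnorm : EqOn (fun x => ‖∇ u x - ∇ w x‖) (fun x => ‖fderiv ℝ (fun y => u y - w y) x‖) U :=
    fun x hx => (hu.norm_fderiv_sub hw' hx).symm
  rw [setIntegral_congr_fun hU.measurableSet hnorm]
  exact (hu.c1ZeroBoundary_sub hw' hU hw.eqOn_frontier).setIntegral_abs_le hU hUr hr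
    ((hu.integrableOn_norm_gradient_sub hp hw' hU hUb).congr_fun hnorm hU.measurableSet)

end IsPHarmonicReplacement

end Replacement

section Comparison

variable {N : ℕ} {p : ℝ} {U : Set (EuclideanSpace ℝ (Fin N))}
  {u w : EuclideanSpace ℝ (Fin N) → ℝ} {x₀ : EuclideanSpace ℝ (Fin N)} {r : ℝ}

lemma continuous_Vmap (hp : 0 < p) : Continuous (Vmap N p) := by
  have hflux := continuous_norm_rpow_smul_self (E := EuclideanSpace ℝ (Fin N))
    (p := (p - 2) / 2 + 2) (by linarith)
  rw [add_sub_cancel_right] at hflux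
  exact hflux

lemma norm_Vmap_sub_sq_le (hp : 0 < p) (a b : EuclideanSpace ℝ (Fin N)) :
    ‖Vmap N p a - Vmap N p b‖ ^ 2 ≤ 2 * (‖a‖ ^ p + ‖b‖ ^ p) := by
  rw [← norm_Vmap_sq hp, ← norm_Vmap_sq hp]
  exact (pow_le_pow_left₀ (norm_nonneg _) (norm_sub_le _ _) 2).trans add_sq_le

namespace HasFiniteEnergyOn

lemma integrableOn_norm_Vmap_sub_sq (hp : 0 < p) (hu : HasFiniteEnergyOn p volume U u)
    (hw : HasFiniteEnergyOn p volume U w) (hU : IsOpen U) :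
    IntegrableOn (fun x => ‖Vmap N p (∇ u x) - Vmap N p (∇ w x)‖ ^ 2) U := by
  have hmeas {f : EuclideanSpace ℝ (Fin N) → ℝ} (hf : HasFiniteEnergyOn p volume U f) :
      AEStronglyMeasurable (fun x => Vmap N p (∇ f x)) (volume.restrict U) :=
    (continuous_Vmap hp).comp_aestronglyMeasurable (hf.aestronglyMeasurable_gradient hU)
  refine ((hu.integrableOn.add hw.integrableOn).const_mul 2).mono'
    (((hmeas hu).sub (hmeas hw)).norm.pow 2) (.of_forall fun x => ?_)
  rw [Real.norm_of_nonneg (by positivity)]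
  exact norm_Vmap_sub_sq_le hp _ _

lemma mul_setIntegral_norm_gradient_sub_le (hp1 : 1 < p) (hp2 : p ≤ 2)
    (hu : HasFiniteEnergyOn p volume U u) (hw : HasFiniteEnergyOn p volume U w) (hU : IsOpen U)
    (hUb : Bornology.IsBounded U) {A : ℝ} (hA : 0 ≤ A) (hr : 0 < r) :
    A * r * ∫ x in U, ‖∇ u x - ∇ w x‖ ≤
      (p - 1) / 4 * (∫ x in U, ‖Vmap N p (∇ u x) - Vmap N p (∇ w x)‖ ^ 2) +
      4 / (p - 1) * A ^ 2 * (r ^ p * (volume.real U +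
        r ^ p * ((∫ x in U, ‖∇ u x‖ ^ p) + ∫ x in U, ‖∇ w x‖ ^ p))) := by
  have hone : IntegrableOn (fun _ => (1 : ℝ)) U := integrableOn_const hUb.measure_lt_top.ne
  have hV := hu.integrableOn_norm_Vmap_sub_sq (by linarith) hw hU
  have hsum : IntegrableOn (fun x => r ^ p * (‖∇ u x‖ ^ p + ‖∇ w x‖ ^ p)) U :=
    (hu.integrableOn.add hw.integrableOn).const_mul _
  have hrest : IntegrableOn (fun x => 4 / (p - 1) * A ^ 2 *
      (r ^ p * (1 + r ^ p * (‖∇ u x‖ ^ p + ‖∇ w x‖ ^ p)))) U :=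
    ((hone.add hsum).const_mul _).const_mul _
  calc A * r * ∫ x in U, ‖∇ u x - ∇ w x‖
      = ∫ x in U, A * r * ‖∇ u x - ∇ w x‖ := (integral_const_mul _ _).symm
    _ ≤ ∫ x in U, ((p - 1) / 4 * ‖Vmap N p (∇ u x) - Vmap N p (∇ w x)‖ ^ 2 + 4 / (p - 1) * A ^ 2 *
          (r ^ p * (1 + r ^ p * (‖∇ u x‖ ^ p + ‖∇ w x‖ ^ p)))) :=
        integral_mono ((hu.integrableOn_norm_gradient_sub hp1.le hw hU hUb).const_mul _)
          ((hV.const_mul _).add hrest)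
          fun x => mul_norm_sub_le_norm_Vmap_sub_sq hp1 hp2 hA hr _ _
    _ = _ := by
        rw [integral_add (hV.const_mul _) hrest, integral_const_mul, integral_const_mul,
          integral_const_mul, integral_add hone hsum, integral_const_mul,
          integral_add hu.integrableOn hw.integrableOn, setIntegral_const, smul_eq_mul, mul_one]

end HasFiniteEnergyOn

/- The Hölder term `|u - w|^ν` is interpolated linearly at height `s`, leaving `s` free. -/
lemma HasFiniteEnergyOn.setIntegral_norm_gradient_rpow_sub_le (hp : 0 < p)
    (hu : HasFiniteEnergyOn p volume U u) (hw : HasFiniteEnergyOn p volume U w) (hU : IsOpen U)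
    (hUb : Bornology.IsBounded U) {F : ℝ → ℝ} {K M ν s : ℝ} (hF : Continuous F)
    (hK : 0 ≤ K) (hν : ν ∈ Icc (0 : ℝ) 1) (hs : 0 < s)
    (hHolder : ∀ a b, |a| ≤ M → |b| ≤ M → F a - F b ≤ K * |a - b| ^ ν)
    (huM : ∀ x ∈ U, |u x| ≤ M) (hwM : ∀ x ∈ U, |w x| ≤ M)
    (hmin : ∫ x in U, (‖∇ u x‖ ^ p / p + F (u x)) ≤ ∫ x in U, (‖∇ w x‖ ^ p / p + F (w x))) :
    (∫ x in U, ‖∇ u x‖ ^ p) - (∫ x in U, ‖∇ w x‖ ^ p) ≤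
      p * K * (s ^ ν * volume.real U + s ^ (ν - 1) * ∫ x in U, |u x - w x|) := by
  have hFu := hu.integrableOn_comp hF hUb
  have hFw := hw.integrableOn_comp hF hUb
  have hdiff : IntegrableOn (fun x => s ^ (ν - 1) * |u x - w x|) U :=
    ((hu.integrableOn_comp continuous_id hUb).sub
      (hw.integrableOn_comp continuous_id hUb)).abs.const_mul _
  have hconst : IntegrableOn (fun _ => s ^ ν) U := integrableOn_const hUb.measure_lt_top.ne
  have hpot : (∫ x in U, F (w x)) - ∫ x in U, F (u x) ≤
      K * (s ^ ν * volume.real U + s ^ (ν - 1) * ∫ x in U, |u x - w x|) :=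
    calc (∫ x in U, F (w x)) - ∫ x in U, F (u x)
        = ∫ x in U, (F (w x) - F (u x)) := (integral_sub hFw hFu).symm
      _ ≤ ∫ x in U, K * (s ^ ν + s ^ (ν - 1) * |u x - w x|) := by
          refine setIntegral_mono_on (hFw.sub hFu) ((hconst.add hdiff).const_mul K)
            hU.measurableSet fun x hx => ?_
          refine (hHolder _ _ (hwM x hx) (huM x hx)).trans (mul_le_mul_of_nonneg_left ?_ hK)
          rw [abs_sub_comm]
          exact rpow_le_rpow_add_mul hs (abs_nonneg _) hν.1 hν.2
      _ = _ := by
          rw [integral_const_mul, integral_add hconst hdiff, integral_const_mul,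
            setIntegral_const, smul_eq_mul, mul_comm (volume.real U)]
  rw [integral_add (hu.integrableOn.div_const p) hFu,
    integral_add (hw.integrableOn.div_const p) hFw, integral_div, integral_div] at hmin
  have hgap : ((∫ x in U, ‖∇ u x‖ ^ p) - ∫ x in U, ‖∇ w x‖ ^ p) / p ≤
      K * (s ^ ν * volume.real U + s ^ (ν - 1) * ∫ x in U, |u x - w x|) := by
    rw [sub_div]; linarith
  rwa [div_le_iff₀' hp, ← mul_assoc] at hgap

namespace IsPHarmonicReplacement

lemma mul_setIntegral_norm_Vmap_sub_sq_le (hp1 : 1 < p) (hp2 : p ≤ 2)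
    (hw : IsPHarmonicReplacement p volume U u w) (hu : HasFiniteEnergyOn p volume U u)
    (hU : IsOpen U) (hUb : Bornology.IsBounded U) :
    (p - 1) / 2 * ∫ x in U, ‖Vmap N p (∇ u x) - Vmap N p (∇ w x)‖ ^ 2 ≤
      (∫ x in U, ‖∇ u x‖ ^ p) - ∫ x in U, ‖∇ w x‖ ^ p := by
  have hw' := hw.toHasFiniteEnergyOn
  have hgap : IntegrableOn (fun x => ‖∇ u x‖ ^ p - ‖∇ w x‖ ^ p) U :=
    hu.integrableOn.sub hw.integrableOn
  have hinner : IntegrableOn (fun x => ⟪‖∇ w x‖ ^ (p - 2) • ∇ w x, ∇ u x - ∇ w x⟫_ℝ) U :=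
    (hu.integrableOn_norm_gradient_sub_mul_norm_flux hp1 hw' hU).mono'
      ((hw'.aestronglyMeasurable_flux hp1 hU).inner
        ((hu.aestronglyMeasurable_gradient hU).sub (hw'.aestronglyMeasurable_gradient hU)))
      (.of_forall fun x => (abs_real_inner_le_norm _ _).trans_eq (mul_comm _ _))
  calc (p - 1) / 2 * ∫ x in U, ‖Vmap N p (∇ u x) - Vmap N p (∇ w x)‖ ^ 2
      = ∫ x in U, (p - 1) / 2 * ‖Vmap N p (∇ u x) - Vmap N p (∇ w x)‖ ^ 2 :=
        (integral_const_mul _ _).symm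
    _ ≤ ∫ x in U, (‖∇ u x‖ ^ p - ‖∇ w x‖ ^ p -
          p * ⟪‖∇ w x‖ ^ (p - 2) • ∇ w x, ∇ u x - ∇ w x⟫_ℝ) :=
        integral_mono ((hu.integrableOn_norm_Vmap_sub_sq (by linarith) hw' hU).const_mul _)
          (hgap.sub (hinner.const_mul p)) fun x => norm_Vmap_sub_sq_le_bregman hp1 hp2 _ _
    _ = (∫ x in U, ‖∇ u x‖ ^ p) - ∫ x in U, ‖∇ w x‖ ^ p := by
        rw [integral_sub hgap (hinner.const_mul p), integral_const_mul,
          hw.setIntegral_inner_flux_gradient_sub_eq_zero hp1 hu hU hUb, mul_zero, sub_zero,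
          integral_sub hu.integrableOn hw.integrableOn]

lemma setIntegral_norm_Vmap_sub_sq_le_of_height [NeZero N] (hp1 : 1 < p) (hp2 : p ≤ 2)
    (hw : IsPHarmonicReplacement p volume U u w) (hu : HasFiniteEnergyOn p volume U u)
    (hU : IsOpen U) (hr : 0 < r) (hUr : U ⊆ closedBall x₀ r) {F : ℝ → ℝ} {K M ν s : ℝ}
    (hF : Continuous F) (hK : 0 ≤ K) (hν : ν ∈ Icc (0 : ℝ) 1) (hs : 0 < s)
    (hHolder : ∀ a b, |a| ≤ M → |b| ≤ M → F a - F b ≤ K * |a - b| ^ ν)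
    (huM : ∀ x ∈ U, |u x| ≤ M) (hwM : ∀ x ∈ U, |w x| ≤ M)
    (hmin : ∫ x in U, (‖∇ u x‖ ^ p / p + F (u x)) ≤ ∫ x in U, (‖∇ w x‖ ^ p / p + F (w x))) :
    (p - 1) / 4 * ∫ x in U, ‖Vmap N p (∇ u x) - Vmap N p (∇ w x)‖ ^ 2 ≤
      p * K * (s ^ ν * volume.real U) + 4 / (p - 1) * (p * K * s ^ (ν - 1)) ^ 2 *
        (r ^ p * (volume.real U + r ^ p * (2 * ∫ x in U, ‖∇ u x‖ ^ p))) := by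
  have hw' := hw.toHasFiniteEnergyOn
  have hUb := isBounded_closedBall.subset hUr
  have hA : 0 ≤ p * K * s ^ (ν - 1) := by positivity
  have hexcess := hw.mul_setIntegral_norm_Vmap_sub_sq_le hp1 hp2 hu hU hUb
  have hgap := hu.setIntegral_norm_gradient_rpow_sub_le (by linarith) hw' hU hUb hF hK hν hs hHolder
    huM hwM hmin
  have hpoincare := mul_le_mul_of_nonneg_left
    (hw.setIntegral_abs_sub_le hp1.le hu hU hUr hr.le) hA
  have hyoung := hu.mul_setIntegral_norm_gradient_sub_le hp1 hp2 hw' hU hUb hA hr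
  have hE : 0 ≤ ∫ x in U, ‖Vmap N p (∇ u x) - Vmap N p (∇ w x)‖ ^ 2 :=
    integral_nonneg fun x => by positivity
  have hGw : ∫ x in U, ‖∇ w x‖ ^ p ≤ ∫ x in U, ‖∇ u x‖ ^ p := by nlinarith
  have hsum : 4 / (p - 1) * (p * K * s ^ (ν - 1)) ^ 2 * (r ^ p * (volume.real U + r ^ p *
      ((∫ x in U, ‖∇ u x‖ ^ p) + ∫ x in U, ‖∇ w x‖ ^ p))) ≤
      4 / (p - 1) * (p * K * s ^ (ν - 1)) ^ 2 *
        (r ^ p * (volume.real U + r ^ p * (2 * ∫ x in U, ‖∇ u x‖ ^ p))) := by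
    have := sub_pos.2 hp1
    gcongr
    linarith
  linarith

end IsPHarmonicReplacement

end Comparison

section Excess

variable {N : ℕ} {p : ℝ} {U Ω : Set (EuclideanSpace ℝ (Fin N))}
  {u w : EuclideanSpace ℝ (Fin N) → ℝ} {x₀ : EuclideanSpace ℝ (Fin N)} {r : ℝ}

/- The height `s = r ^ (p / (2 - ν))` balances the two terms of the estimate with free `s`. -/
lemma rpow_height_balance (hr : 0 < r) {ν : ℝ} (hν : ν < 2) :
    ((r ^ (p / (2 - ν))) ^ (ν - 1)) ^ 2 * r ^ p = r ^ (p * ν / (2 - ν)) := by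
  have hν' : 2 - ν ≠ 0 := by linarith
  rw [← Real.rpow_mul hr.le, ← Real.rpow_mul_natCast hr.le, ← Real.rpow_add hr]
  congr 1
  push_cast
  field_simp
  ring

lemma measureReal_ball_eq (hr : 0 < r) :
    volume.real (ball x₀ r) = r ^ N * volume.real (ball (0 : EuclideanSpace ℝ (Fin N)) 1) := by
  rw [measureReal_def, Measure.addHaar_ball_of_pos volume x₀ hr, finrank_euclideanSpace_fin,
    ENNReal.toReal_mul, ENNReal.toReal_ofReal (by positivity), measureReal_def]

lemma IsPHarmonicReplacement.setIntegral_norm_Vmap_sub_sq_le [NeZero N] (hp1 : 1 < p) (hp2 : p ≤ 2)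
    (hw : IsPHarmonicReplacement p volume U u w) (hu : HasFiniteEnergyOn p volume U u)
    (hU : IsOpen U) (hr : 0 < r) (hUr : U ⊆ closedBall x₀ r) {F : ℝ → ℝ} {K M ν : ℝ}
    (hF : Continuous F) (hK : 0 ≤ K) (hν : ν ∈ Icc (0 : ℝ) 1)
    (hHolder : ∀ a b, |a| ≤ M → |b| ≤ M → F a - F b ≤ K * |a - b| ^ ν)
    (huM : ∀ x ∈ U, |u x| ≤ M) (hwM : ∀ x ∈ U, |w x| ≤ M)
    (hmin : ∫ x in U, (‖∇ u x‖ ^ p / p + F (u x)) ≤ ∫ x in U, (‖∇ w x‖ ^ p / p + F (w x))) :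
    (p - 1) / 4 * ∫ x in U, ‖Vmap N p (∇ u x) - Vmap N p (∇ w x)‖ ^ 2 ≤
      r ^ (p * ν / (2 - ν)) * (p * K * volume.real U + 4 / (p - 1) * (p * K) ^ 2 *
        (volume.real U + r ^ p * (2 * ∫ x in U, ‖∇ u x‖ ^ p))) := by
  set s := r ^ (p / (2 - ν)) with hs
  have hsν : s ^ ν = r ^ (p * ν / (2 - ν)) := by
    rw [hs, ← Real.rpow_mul hr.le, div_mul_eq_mul_div]
  have hbalance : (s ^ (ν - 1)) ^ 2 * r ^ p = r ^ (p * ν / (2 - ν)) :=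
    rpow_height_balance hr (by linarith [hν.2])
  have hs0 : 0 < s := Real.rpow_pos_of_pos hr _
  refine (hw.setIntegral_norm_Vmap_sub_sq_le_of_height hp1 hp2 hu hU hr hUr hF hK hν hs0
    hHolder huM hwM hmin).trans_eq ?_
  rw [hsν, ← hbalance]
  ring

namespace APLocMin

variable {F : ℝ → ℝ} {M : ℝ}

lemma hasFiniteEnergyOn (hu : APLocMin N p F Ω u) (hΩ : IsOpen Ω) (hUΩ : closure U ⊆ Ω) :
    HasFiniteEnergyOn p volume U u where
  differentiableAt x hx := hu.1 x (hUΩ (subset_closure hx))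
  continuousOn_gradient := hu.2.1.mono (subset_closure.trans hUΩ)
  continuousOn_closure := (hu.contDiffOn hΩ).continuousOn.mono hUΩ
  integrableOn := hu.2.2.1.mono_set (subset_closure.trans hUΩ)

lemma rpow_mul_setIntegral_norm_gradient_le (hu : APLocMin N p F Ω u) (hΩ : IsOpen Ω) (hp1 : 1 ≤ p)
    (hp2 : p ≤ 2) (hF : Continuous F) (hFmul : ∀ c ∈ Icc (0 : ℝ) 1, ∀ t, F (c * t) ≤ F t)
    (hr : 0 < r) (hsub : closedBall x₀ (2 * r) ⊆ Ω) (huM : ∀ x ∈ ball x₀ (2 * r), |u x| ≤ M) :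
    r ^ p * ∫ x in ball x₀ r, ‖∇ u x‖ ^ p ≤
      16 / 9 * ((2 * M) ^ p * (2 ^ N * volume.real (ball x₀ r))) := by
  have hM : 0 ≤ M := (abs_nonneg _).trans (huM x₀ (mem_ball_self (by positivity)))
  have hcacc := hu.caccioppoli hΩ hp1 hp2 hF hFmul (by positivity) hsub huM
  have hscale : (4 * M / (2 * r)) ^ p * r ^ p = (2 * M) ^ p := by
    rw [← Real.mul_rpow (by positivity) hr.le]
    congr 1
    field_simp
    ring
  have hvol : volume.real (ball x₀ (2 * r)) = 2 ^ N * volume.real (ball x₀ r) := by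
    rw [measureReal_ball_eq (by positivity), measureReal_ball_eq hr, mul_pow, mul_assoc]
  rw [mul_div_cancel_left₀ r two_ne_zero, hvol] at hcacc
  rw [← hscale]
  nlinarith [mul_le_mul_of_nonneg_left hcacc (Real.rpow_nonneg hr.le p)]

end APLocMin

/-- A constant for which the comparison estimate with a `p`-harmonic replacement holds, for
functions bounded by `M` and potentials with Hölder constant `K` on `[-M, M]`. -/
noncomputable def comparisonConst (N : ℕ) (p K M : ℝ) : ℝ :=
  4 / (p - 1) * (p * K + 4 / (p - 1) * (p * K) ^ 2 * (1 + 2 * (16 / 9 * ((2 * M) ^ p * 2 ^ N)))) *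
    volume.real (ball (0 : EuclideanSpace ℝ (Fin N)) 1)

lemma APLocMin.setIntegral_norm_Vmap_sub_sq_le [NeZero N] {F : ℝ → ℝ} (hu : APLocMin N p F Ω u)
    (hΩ : IsOpen Ω) (hp1 : 1 < p) (hp2 : p ≤ 2) (hF : Continuous F)
    (hFmul : ∀ c ∈ Icc (0 : ℝ) 1, ∀ t, F (c * t) ≤ F t) {K M ν : ℝ} (hK : 0 ≤ K)
    (hν : ν ∈ Icc (0 : ℝ) 1) (hHolder : ∀ a b, |a| ≤ M → |b| ≤ M → F a - F b ≤ K * |a - b| ^ ν)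
    (hr : 0 < r) (hsub : closedBall x₀ (2 * r) ⊆ Ω) (huM : ∀ x ∈ ball x₀ (2 * r), |u x| ≤ M)
    (hw : IsPHarmonicReplacement p volume (ball x₀ r) u w) (hwM : ∀ x ∈ ball x₀ r, |w x| ≤ M)
    (hmin : ∫ x in ball x₀ r, (‖∇ u x‖ ^ p / p + F (u x)) ≤
      ∫ x in ball x₀ r, (‖∇ w x‖ ^ p / p + F (w x))) :
    ∫ x in ball x₀ r, ‖Vmap N p (∇ u x) - Vmap N p (∇ w x)‖ ^ 2 ≤
      comparisonConst N p K M * r ^ (N + p * ν / (2 - ν)) := by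
  have hp := sub_pos.2 hp1
  have hball : ball x₀ r ⊆ closedBall x₀ (2 * r) :=
    ball_subset_closedBall.trans (closedBall_subset_closedBall (by linarith))
  have huE : HasFiniteEnergyOn p volume (ball x₀ r) u :=
    hu.hasFiniteEnergyOn hΩ ((isClosed_closedBall.closure_subset_iff.2 hball).trans hsub)
  have hexcess := hw.setIntegral_norm_Vmap_sub_sq_le hp1 hp2 huE isOpen_ball hr
    ball_subset_closedBall hF hK hν hHolder
    (fun x hx => huM x (ball_subset_ball (by linarith) hx)) hwM hmin
  have henergy := hu.rpow_mul_setIntegral_norm_gradient_le hΩ hp1.le hp2 hF hFmul hr hsub huM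
  rw [← div_le_div_iff_of_pos_right (by positivity : 0 < 4 / (p - 1))]
  calc (∫ x in ball x₀ r, ‖Vmap N p (∇ u x) - Vmap N p (∇ w x)‖ ^ 2) / (4 / (p - 1))
      = (p - 1) / 4 * ∫ x in ball x₀ r, ‖Vmap N p (∇ u x) - Vmap N p (∇ w x)‖ ^ 2 := by
        rw [div_div_eq_mul_div, mul_comm, ← div_mul_eq_mul_div]
    _ ≤ r ^ (p * ν / (2 - ν)) * (p * K * volume.real (ball x₀ r) + 4 / (p - 1) * (p * K) ^ 2 *
          (volume.real (ball x₀ r) +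
            2 * (16 / 9 * ((2 * M) ^ p * (2 ^ N * volume.real (ball x₀ r)))))) := by
        refine hexcess.trans ?_
        rw [mul_left_comm (r ^ p)]
        gcongr
    _ = comparisonConst N p K M * r ^ (N + p * ν / (2 - ν)) / (4 / (p - 1)) := by
        rw [measureReal_ball_eq hr, Real.rpow_add hr, Real.rpow_natCast, comparisonConst]
        field_simp

end Excess

section AltPhillips

lemma abs_le_of_sSup_abs_le {X : Type*} [PseudoMetricSpace X] [ProperSpace X] {U : Set X}
    {u w : X → ℝ} {M : ℝ} (hU : Bornology.IsBounded U) (hw : ContinuousOn w (closure U))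
    (hsup : sSup ((fun x => |w x|) '' U) ≤ sSup ((fun x => |u x|) '' U))
    (hu : ∀ x ∈ U, |u x| ≤ M) {x : X} (hx : x ∈ U) : |w x| ≤ M := by
  have hbdd : BddAbove ((fun x => |w x|) '' U) :=
    (hU.isCompact_closure.bddAbove_image hw.abs).mono (image_mono subset_closure)
  calc |w x| ≤ sSup ((fun x => |w x|) '' U) := le_csSup hbdd (mem_image_of_mem _ hx)
    _ ≤ sSup ((fun x => |u x|) '' U) := hsup
    _ ≤ M := csSup_le ⟨_, mem_image_of_mem _ hx⟩ (forall_mem_image.2 hu)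

lemma mul_Fgam_sub_le {γ lp lm δ δ₀ M s t : ℝ} (hγ : 0 ≤ γ) (hlp : 0 ≤ lp) (hlm : 0 ≤ lm)
    (hδ : 0 ≤ δ) (hδ₀ : δ ≤ δ₀) (hs : |s| ≤ M) (ht : |t| ≤ M) :
    δ * Fgam γ lp lm s - δ * Fgam γ lp lm t ≤
      δ₀ * ((lp + lm) * max 1 (γ * M ^ (γ - 1))) * |s - t| ^ min γ 1 :=
  calc δ * Fgam γ lp lm s - δ * Fgam γ lp lm t
      = δ * (Fgam γ lp lm s - Fgam γ lp lm t) := (mul_sub _ _ _).symm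
    _ ≤ δ * ((lp + lm) * max 1 (γ * M ^ (γ - 1)) * |s - t| ^ min γ 1) :=
        mul_le_mul_of_nonneg_left (Fgam_sub_le hγ hlp hlm hs ht) hδ
    _ ≤ δ₀ * ((lp + lm) * max 1 (γ * M ^ (γ - 1)) * |s - t| ^ min γ 1) := by gcongr
    _ = _ := (mul_assoc _ _ _).symm

lemma APLocMin.setIntegral_norm_Vmap_sub_sq_le_of_Fgam {N : ℕ} [NeZero N] {p γ lp lm δ δ₀ M R : ℝ}
    {Ω : Set (EuclideanSpace ℝ (Fin N))} {u w : EuclideanSpace ℝ (Fin N) → ℝ}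
    {x₀ : EuclideanSpace ℝ (Fin N)} (hp1 : 1 < p) (hp2 : p ≤ 2) (hγ : 0 ≤ γ)
    (hlp : 0 ≤ lp) (hlm : 0 ≤ lm) (hδ : 0 ≤ δ) (hδ₀ : δ ≤ δ₀) (hΩ : IsOpen Ω)
    (hu : APLocMin N p (fun t => δ * Fgam γ lp lm t) Ω u) (hR : 0 < R)
    (hsub : closedBall x₀ (4 * R) ⊆ Ω) (huM : ∀ x ∈ ball x₀ (4 * R), |u x| ≤ M)
    (hw : IsPHarmonicReplacement p volume (ball x₀ (2 * R)) u w)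
    (hwM : ∀ x ∈ ball x₀ (2 * R), |w x| ≤ M)
    (hmin : ∫ x in ball x₀ (2 * R), (‖∇ u x‖ ^ p / p + δ * Fgam γ lp lm (u x)) ≤
      ∫ x in ball x₀ (2 * R), (‖∇ w x‖ ^ p / p + δ * Fgam γ lp lm (w x))) :
    ∫ x in ball x₀ R, ‖Vmap N p (∇ u x) - Vmap N p (∇ w x)‖ ^ 2 ≤
      comparisonConst N p (δ₀ * ((lp + lm) * max 1 (γ * M ^ (γ - 1)))) M *
        (2 * R) ^ (N + p * min γ 1 / (2 - min γ 1)) := by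
  have h4R : 4 * R = 2 * (2 * R) := by ring
  rw [h4R] at hsub huM
  have hδ₀' : 0 ≤ δ₀ := hδ.trans hδ₀
  have hbig := hu.setIntegral_norm_Vmap_sub_sq_le hΩ hp1 hp2
    (continuous_const.mul (continuous_Fgam hγ))
    (fun c hc t => mul_le_mul_of_nonneg_left (Fgam_mul_le hγ hlp hlm hc t) hδ) (by positivity)
    ⟨le_min hγ zero_le_one, min_le_right _ _⟩
    (fun s t hs ht => mul_Fgam_sub_le hγ hlp hlm hδ hδ₀ hs ht) (by positivity) hsub huM hw hwM hmin
  have hballs : closedBall x₀ (2 * R) ⊆ closedBall x₀ (2 * (2 * R)) :=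
    closedBall_subset_closedBall (by linarith)
  have hint := (hu.hasFiniteEnergyOn hΩ (closure_ball_subset_closedBall.trans
    (hballs.trans hsub))).integrableOn_norm_Vmap_sub_sq (by linarith)
    hw.toHasFiniteEnergyOn isOpen_ball
  refine (setIntegral_mono_set hint (.of_forall fun x => by positivity) ?_).trans hbig
  exact (ball_subset_ball (by linarith)).eventuallyLE

theorem stmt12_general (N : ℕ) [NeZero N] (p γ lp lm δ₀ M : ℝ) (hp1 : 1 < p) (hp2 : p ≤ 2)
    (hγ : 0 < γ) (hlp : 0 ≤ lp) (hlm : 0 ≤ lm) :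
    ∃ C : ℝ, 0 < C ∧ ∀ (Ω : Set (EuclideanSpace ℝ (Fin N))), IsOpen Ω →
      ∀ δ : ℝ, 0 ≤ δ → δ ≤ δ₀ →
      ∀ u : EuclideanSpace ℝ (Fin N) → ℝ, APLocMin N p (fun t => δ * Fgam γ lp lm t) Ω u →
      ∀ (x₀ : EuclideanSpace ℝ (Fin N)) (R : ℝ), 0 < R → closedBall x₀ (4 * R) ⊆ Ω →
        (∀ x ∈ ball x₀ (4 * R), |u x| ≤ M) →
      ∀ w : EuclideanSpace ℝ (Fin N) → ℝ,
        IsPHarmonicReplacement p volume (ball x₀ (2 * R)) u w →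
        (∀ x ∈ ball x₀ (2 * R), |w x| ≤ M) →
        (∫ x in ball x₀ (2 * R), (‖∇ u x‖ ^ p / p + δ * Fgam γ lp lm (u x))) ≤
          (∫ x in ball x₀ (2 * R), (‖∇ w x‖ ^ p / p + δ * Fgam γ lp lm (w x))) →
        (γ ≤ 1 → (∫ x in ball x₀ R, ‖Vmap N p (∇ u x) - Vmap N p (∇ w x)‖ ^ (2 : ℝ)) ≤
            C * R ^ ((N : ℝ) + p * γ / (2 - γ))) ∧
          (1 ≤ γ → (∫ x in ball x₀ R, ‖Vmap N p (∇ u x) - Vmap N p (∇ w x)‖ ^ (2 : ℝ)) ≤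
            C * R ^ ((N : ℝ) + p)) := by
  set K := δ₀ * ((lp + lm) * max 1 (γ * M ^ (γ - 1)))
  set q := (N : ℝ) + p * min γ 1 / (2 - min γ 1) with hq
  refine ⟨max 1 (comparisonConst N p K M * 2 ^ q), by positivity, ?_⟩
  intro Ω hΩ δ hδ hδ₀ u hu x₀ R hR hsub huM w hw hwM hmin
  have hbound : (∫ x in ball x₀ R, ‖Vmap N p (∇ u x) - Vmap N p (∇ w x)‖ ^ (2 : ℝ)) ≤
      max 1 (comparisonConst N p K M * 2 ^ q) * R ^ q := by
    simp_rw [Real.rpow_two]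
    refine (APLocMin.setIntegral_norm_Vmap_sub_sq_le_of_Fgam hp1 hp2 hγ.le hlp hlm hδ hδ₀ hΩ hu hR
      hsub huM hw hwM hmin).trans ?_
    rw [Real.mul_rpow two_pos.le hR.le, ← mul_assoc]
    exact mul_le_mul_of_nonneg_right (le_max_right _ _) (by positivity)
  have hq_of_le (hγ1 : γ ≤ 1) : q = N + p * γ / (2 - γ) := by rw [hq, min_eq_left hγ1]
  have hq_of_ge (hγ1 : 1 ≤ γ) : q = N + p := by rw [hq, min_eq_right hγ1]; norm_num
  exact ⟨fun hγ1 => hq_of_le hγ1 ▸ hbound, fun hγ1 => hq_of_ge hγ1 ▸ hbound⟩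

end AltPhillips

/-- Comparison estimate with the `p`-harmonic replacement `w` of a local minimizer of
`J_δ` in the singular regime `1 < p < 2`, via the map `V`. -/
theorem stmt12 (N : ℕ) (hN : 1 ≤ N) (p γ lp lm δ₀ M : ℝ)
    (hp1 : 1 < p) (hp2 : p < 2) (hγ0 : 0 < γ) (hγp : γ < p) (hlp : 0 < lp)
    (hlm : 0 < lm) (hδ₀ : 0 < δ₀) (hM : 0 < M) :
    ∃ C : ℝ, 0 < C ∧
      ∀ (Ω : Set (EuclideanSpace ℝ (Fin N))), IsOpen Ω → Bornology.IsBounded Ω →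
      ∀ δ : ℝ, 0 ≤ δ → δ ≤ δ₀ →
      ∀ u : EuclideanSpace ℝ (Fin N) → ℝ,
        APLocMin N p (fun t => δ * Fgam γ lp lm t) Ω u →
      ∀ (x₀ : EuclideanSpace ℝ (Fin N)) (R : ℝ), 0 < R →
        closure (Metric.ball x₀ (4 * R)) ⊆ Ω →
        (∀ x ∈ Metric.ball x₀ (4 * R), |u x| ≤ M) →
      ∀ w : EuclideanSpace ℝ (Fin N) → ℝ,
        (∀ x ∈ Metric.ball x₀ (2 * R), DifferentiableAt ℝ w x) →
        ContinuousOn (fun x => gradient w x) (Metric.ball x₀ (2 * R)) →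
        ContinuousOn w (closure (Metric.ball x₀ (2 * R))) →
        (∀ φ : EuclideanSpace ℝ (Fin N) → ℝ, ContDiff ℝ (⊤ : ℕ∞) φ → HasCompactSupport φ →
          tsupport φ ⊆ Metric.ball x₀ (2 * R) →
          (∫ x in Metric.ball x₀ (2 * R),
            ‖gradient w x‖ ^ (p - 2) * ⟪gradient w x, gradient φ x⟫_ℝ) = 0) →
        Set.EqOn w u (Metric.sphere x₀ (2 * R)) →
        sSup ((fun x => |w x|) '' Metric.ball x₀ (2 * R)) ≤
          sSup ((fun x => |u x|) '' Metric.ball x₀ (2 * R)) →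
        IntegrableOn (fun x => ‖gradient w x‖ ^ p) (Metric.ball x₀ (2 * R)) volume →
        (∫ x in Metric.ball x₀ (2 * R), ‖gradient w x‖ ^ p) ≤
          (∫ x in Metric.ball x₀ (2 * R), ‖gradient u x‖ ^ p) →
        (∫ x in Metric.ball x₀ (2 * R),
            (‖gradient u x‖ ^ p / p + δ * Fgam γ lp lm (u x))) ≤
          (∫ x in Metric.ball x₀ (2 * R),
            (‖gradient w x‖ ^ p / p + δ * Fgam γ lp lm (w x))) →
        ((γ ≤ 1 →
            (∫ x in Metric.ball x₀ R,
                ‖Vmap N p (gradient u x) - Vmap N p (gradient w x)‖ ^ (2 : ℝ)) ≤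
              C * R ^ ((N : ℝ) + p * γ / (2 - γ))) ∧
          (1 ≤ γ →
            (∫ x in Metric.ball x₀ R,
                ‖Vmap N p (gradient u x) - Vmap N p (gradient w x)‖ ^ (2 : ℝ)) ≤
              C * R ^ ((N : ℝ) + p))) := by
  have : NeZero N := ⟨by omega⟩
  obtain ⟨C, hC, hcomparison⟩ :=
    stmt12_general N p γ lp lm δ₀ M hp1 hp2.le hγ0 hlp.le hlm.le
  refine ⟨C, hC, fun Ω hΩ _ δ hδ hδδ₀ u hu x₀ R hR hsub huM w hwd hwg hwc hweak hbdry hsup hint _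
    hmin => hcomparison Ω hΩ δ hδ hδδ₀ u hu x₀ R hR ?_ huM w ?_ ?_ hmin⟩
  · rwa [closure_ball x₀ (by positivity)] at hsub
  · exact ⟨⟨hwd, hwg, hwc, hint⟩, hweak, by rwa [frontier_ball x₀ (by positivity)]⟩
  · exact fun x => abs_le_of_sSup_abs_le isBounded_ball hwc hsup
      fun x hx => huM x (ball_subset_ball (by linarith) hx)
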